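/- arXiv:1304.0562 — 2 statements merged into one kernel-verified Lean document; each statement's English description precedes it below -/
import Mathlib

section
/- There exists a universal constant C such that for every a ≥ π with μ = √(1 − π²/a²) ≥ 1/2, every t > 0, and all x, r ∈ [0,a] satisfying x ≥ r + a/20 whenever t ≤ a²: |∫_r^a 𝔭_t(x,y) dy − (1+μr)·e^{μ(x−r)}·(−2e^{π²t/(2a²)}/a²)·θ'(x/a, t/a²)| ≤ C·(1+μr)·e^{μ(x−r)}·(1+r²)·max( sin(πx/a), 1_{t ≤ a²} )/a⁴, where θ' is the partial derivative of θ in its first variable. -/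
open Real MeasureTheory Set Filter

/-- The Jacobi-theta-type function `θ(x,t) = 1/2 + ∑_{n≥1} exp(−π²n²t/2)·cos(πnx)`. -/
noncomputable def thetaFn (x t : ℝ) : ℝ :=
  1/2 + ∑' n : ℕ, Real.exp (-(π^2) * ((n : ℝ) + 1)^2 * t / 2) * Real.cos (π * ((n : ℝ) + 1) * x)

/-- Transition density of Brownian motion killed upon exiting `(0,a)`. -/
noncomputable def pker (a t x y : ℝ) : ℝ :=
  (2/a) * ∑' n : ℕ, Real.exp (-(π^2) * ((n : ℝ) + 1)^2 * t / (2 * a^2)) *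
    Real.sin (π * ((n : ℝ) + 1) * x / a) * Real.sin (π * ((n : ℝ) + 1) * y / a)

/-- `μ = √(1 − π²/a²)`. -/
noncomputable def muFn (a : ℝ) : ℝ := Real.sqrt (1 - π^2 / a^2)

/-- Density of the branching Brownian motion with drift `−μ` before absorption. -/
noncomputable def pdens (a t x y : ℝ) : ℝ :=
  Real.exp (muFn a * (x - y) + π^2 * t / (2 * a^2)) * pker a t x y

/-!
The killed kernel is `(θ((x - y)/a) - θ((x + y)/a)) / a` at time `t / a²`, an odd function of `y`.
Near the boundary it is therefore `-2 y θ'(x/a) / a²` up to a cubic error governed by the third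
derivative of `θ`, and integrating `y` and `y³` against `e^{-μ y}` produces the main term and the
error term; since `1 - μ² = π²/a²`, replacing `1/μ²` by `1` is harmless.

For `t ≥ a²` the Fourier series of `θ` controls the derivatives, and every mode carries a factor
`|sin(π n x / a)| ≤ n sin(π x / a)`. For `t ≤ a²` Poisson summation turns `θ` into a sum of
Gaussians centred at the even integers, whose derivatives away from `2ℤ` are bounded uniformly in
time. The Taylor expansion is then valid only for `y ≤ r + a/40`; on the rest of the interval the
kernel has mass at most `1` and the weight `e^{-μ y}` is exponentially small compared to `e^{-μ r}`.
-/

section SymmRemainder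

/-- The third-order remainder of the odd part of `f` at `x`: the error committed when the increment
`f (x - h) - f (x + h)` is replaced by its linearisation `-2 h f' x`. -/
noncomputable def symmRemainder (f : ℝ → ℝ) (x h : ℝ) : ℝ :=
  f (x - h) - f (x + h) + 2 * h * deriv f x

variable {f : ℝ → ℝ} {x h : ℝ}

lemma symmRemainder_sub_const (f : ℝ → ℝ) (c x h : ℝ) :
    symmRemainder (fun z => f z - c) x h = symmRemainder f x h := by
  simp only [symmRemainder, deriv_sub_const, sub_sub_sub_cancel_right]

lemma hasSum_symmRemainder {ι : Type*} {g : ι → ℝ → ℝ}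
    (hsub : HasSum (fun i => g i (x - h)) (f (x - h)))
    (hadd : HasSum (fun i => g i (x + h)) (f (x + h)))
    (hderiv : HasSum (fun i => deriv (g i) x) (deriv f x)) :
    HasSum (fun i => symmRemainder (g i) x h) (symmRemainder f x h) :=
  (hsub.sub hadd).add (hderiv.mul_left (2 * h))

lemma exists_eq_taylor_two_add_iteratedDeriv (hf : ContDiff ℝ 3 f) (x : ℝ) (hh : h ≠ 0) :
    ∃ z ∈ uIcc x (x + h), f (x + h) =
      f x + deriv f x * h + iteratedDeriv 2 f x * h ^ 2 / 2 + iteratedDeriv 3 f z * h ^ 3 / 6 := by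
  have hne : x ≠ x + h := by simpa using hh
  obtain ⟨z, hz, hfz⟩ := taylor_mean_remainder_lagrange_iteratedDeriv (n := 2) hne
    (by norm_num; exact hf.contDiffOn)
  have hwithin : ∀ k ≤ 2, iteratedDerivWithin k f (uIcc x (x + h)) x = iteratedDeriv k f x :=
    fun k hk => iteratedDerivWithin_eq_iteratedDeriv (uniqueDiffOn_uIcc hne)
      (hf.contDiffAt.of_le (by exact_mod_cast hk.trans (by norm_num))) left_mem_uIcc
  refine ⟨z, Ioo_subset_Icc_self hz, ?_⟩
  rw [taylor_within_apply, Finset.sum_range_succ, Finset.sum_range_succ, Finset.sum_range_one,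
    hwithin 0 (by norm_num), hwithin 1 (by norm_num), hwithin 2 le_rfl, iteratedDeriv_zero,
    iteratedDeriv_one] at hfz
  norm_num [Nat.factorial] at hfz
  linarith

-- The even-order Taylor terms of `f (x - h)` and `f (x + h)` cancel.
lemma abs_symmRemainder_le {M : ℝ} (hf : ContDiff ℝ 3 f) (hh : 0 ≤ h)
    (hM : ∀ z ∈ Icc (x - h) (x + h), |iteratedDeriv 3 f z| ≤ M) :
    |symmRemainder f x h| ≤ M * h ^ 3 := by
  obtain rfl | hpos := hh.eq_or_lt
  · simp [symmRemainder]
  obtain ⟨z₁, hz₁, h₁⟩ := exists_eq_taylor_two_add_iteratedDeriv hf x (neg_ne_zero.mpr hpos.ne')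
  obtain ⟨z₂, hz₂, h₂⟩ := exists_eq_taylor_two_add_iteratedDeriv hf x hpos.ne'
  rw [← sub_eq_add_neg, uIcc_of_ge (by linarith)] at hz₁
  rw [uIcc_of_le (by linarith)] at hz₂
  have hM₁ := hM z₁ ⟨hz₁.1, by linarith [hz₁.2]⟩
  have hM₂ := hM z₂ ⟨by linarith [hz₂.1], hz₂.2⟩
  have hM₀ : 0 ≤ M := (abs_nonneg _).trans hM₁
  have hremainder : symmRemainder f x h =
      -((iteratedDeriv 3 f z₁ + iteratedDeriv 3 f z₂) * (h ^ 3 / 6)) := by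
    rw [symmRemainder, sub_eq_add_neg x h, h₁, h₂]
    ring
  rw [hremainder, abs_neg, abs_mul, abs_of_nonneg (by positivity : 0 ≤ h ^ 3 / 6)]
  calc |iteratedDeriv 3 f z₁ + iteratedDeriv 3 f z₂| * (h ^ 3 / 6)
      ≤ (M + M) * (h ^ 3 / 6) := by gcongr; exact (abs_add_le _ _).trans (add_le_add hM₁ hM₂)
    _ ≤ M * h ^ 3 := by nlinarith [mul_nonneg hM₀ (pow_nonneg hh 3)]

end SymmRemainder

section Gaussian

lemma abs_pow_mul_exp_neg_sq_div_two_le (n : ℕ) (u : ℝ) :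
    |u| ^ n * exp (-(u ^ 2 / 2)) ≤ exp (1 / 2) * n.factorial := by
  have hpow : |u| ^ n ≤ exp |u| * n.factorial :=
    (div_le_iff₀ (by positivity)).mp (pow_div_factorial_le_exp _ (abs_nonneg u) n)
  calc |u| ^ n * exp (-(u ^ 2 / 2))
      ≤ exp |u| * n.factorial * exp (-(u ^ 2 / 2)) := by gcongr
    _ = exp (|u| - u ^ 2 / 2) * n.factorial := by rw [sub_eq_add_neg, exp_add]; ring
    _ ≤ exp (1 / 2) * n.factorial := by
        gcongr
        nlinarith [sq_nonneg (|u| - 1), sq_abs u]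

lemma exists_abs_eval_mul_exp_neg_sq_div_two_le (p : Polynomial ℝ) :
    ∃ C, ∀ u : ℝ, |p.eval u * exp (-(u ^ 2 / 2))| ≤ C := by
  induction p using Polynomial.induction_on' with
  | add p q hp hq =>
    obtain ⟨C, hC⟩ := hp
    obtain ⟨D, hD⟩ := hq
    refine ⟨C + D, fun u => ?_⟩
    rw [Polynomial.eval_add, add_mul]
    exact (abs_add_le _ _).trans (add_le_add (hC u) (hD u))
  | monomial n c =>
    refine ⟨|c| * (exp (1 / 2) * n.factorial), fun u => ?_⟩
    rw [Polynomial.eval_monomial, mul_assoc, abs_mul, abs_mul, abs_pow, abs_of_pos (exp_pos _)]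
    exact mul_le_mul_of_nonneg_left (abs_pow_mul_exp_neg_sq_div_two_le n u) (abs_nonneg c)

lemma gaussianPDFReal_zero_eq (v : NNReal) :
    ProbabilityTheory.gaussianPDFReal 0 v =
      fun w => (√(2 * π))⁻¹ * (√v)⁻¹ * exp (-(((√v)⁻¹ * w) ^ 2 / 2)) := by
  funext w
  have hsq : ((√(v : ℝ))⁻¹ * w) ^ 2 / 2 = w ^ 2 / (2 * v) := by
    rw [mul_pow, inv_pow, sq_sqrt v.coe_nonneg]
    ring
  rw [ProbabilityTheory.gaussianPDFReal, sqrt_mul (by positivity), mul_inv, sub_zero, hsq, neg_div]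

lemma contDiff_gaussianPDFReal (v : NNReal) {n : WithTop ℕ∞} :
    ContDiff ℝ n (ProbabilityTheory.gaussianPDFReal 0 v) := by
  rw [gaussianPDFReal_zero_eq]
  fun_prop

lemma iteratedDeriv_gaussianPDFReal (n : ℕ) (v : NNReal) (w : ℝ) :
    iteratedDeriv n (ProbabilityTheory.gaussianPDFReal 0 v) w =
      (√(2 * π))⁻¹ * (√v)⁻¹ ^ (n + 1) * ((-1) ^ n *
        Polynomial.aeval ((√v)⁻¹ * w) (Polynomial.hermite n) *
          exp (-(((√v)⁻¹ * w) ^ 2 / 2))) := by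
  have hscaled := congrFun (iteratedDeriv_comp_const_mul (n := n)
    (by fun_prop : ContDiff ℝ n fun u : ℝ => exp (-(u ^ 2 / 2))) (√v)⁻¹) w
  rw [gaussianPDFReal_zero_eq, iteratedDeriv_const_mul_field, hscaled, iteratedDeriv_eq_iterate,
    Polynomial.deriv_gaussian_eq_hermite_mul_gaussian]
  ring

-- By scaling, the bound is uniform in the variance.
lemma exists_abs_pow_mul_iteratedDeriv_gaussianPDFReal_le (n : ℕ) :
    ∃ C, ∀ (v : NNReal) (w : ℝ),
      |w ^ (n + 1) * iteratedDeriv n (ProbabilityTheory.gaussianPDFReal 0 v) w| ≤ C := by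
  obtain ⟨C, hC⟩ := exists_abs_eval_mul_exp_neg_sq_div_two_le
    (Polynomial.X ^ (n + 1) * (Polynomial.hermite n).map (Int.castRingHom ℝ))
  refine ⟨|(√(2 * π))⁻¹| * C, fun v w => ?_⟩
  set u := (√v)⁻¹ * w with hu
  have hscaled : w ^ (n + 1) * iteratedDeriv n (ProbabilityTheory.gaussianPDFReal 0 v) w =
      (-1) ^ n * ((√(2 * π))⁻¹ * ((Polynomial.X ^ (n + 1) *
        (Polynomial.hermite n).map (Int.castRingHom ℝ)).eval u * exp (-(u ^ 2 / 2)))) := by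
    rw [iteratedDeriv_gaussianPDFReal, Polynomial.eval_mul, Polynomial.eval_pow, Polynomial.eval_X,
      Polynomial.eval_map, ← algebraMap_int_eq, ← Polynomial.aeval_def, ← hu, hu, mul_pow]
    ring
  rw [hscaled, abs_mul, abs_pow, abs_neg, abs_one, one_pow, one_mul, abs_mul]
  gcongr
  exact hC u

end Gaussian

section FourierSeries

/-- The decay factor of the Fourier mode of frequency `n + 1` in `thetaFn`; the shift makes the
sum over all natural numbers start at frequency `1`. -/
noncomputable def thetaCoeff (s : ℝ) (n : ℕ) : ℝ :=
  exp (-(π ^ 2) * ((n : ℝ) + 1) ^ 2 * s / 2)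

/-- The Fourier mode of frequency `n + 1` in `thetaFn`. -/
noncomputable def thetaMode (s : ℝ) (n : ℕ) (z : ℝ) : ℝ :=
  thetaCoeff s n * cos (π * ((n : ℝ) + 1) * z)

variable {s : ℝ}

lemma thetaCoeff_pos (s : ℝ) (n : ℕ) : 0 < thetaCoeff s n :=
  exp_pos _

lemma summable_pow_mul_thetaCoeff (hs : 0 < s) (k : ℕ) :
    Summable fun n : ℕ => ((n : ℝ) + 1) ^ k * thetaCoeff s n := by
  have hgeom := (summable_nat_add_iff 1).mpr
    (summable_pow_mul_exp_neg_nat_mul k (by positivity : 0 < π ^ 2 * s / 2))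
  refine hgeom.of_nonneg_of_le (fun n => mul_nonneg (by positivity) (thetaCoeff_pos s n).le)
    fun n => ?_
  have hfreq : (n : ℝ) + 1 ≤ ((n : ℝ) + 1) ^ 2 := by nlinarith [n.cast_nonneg (α := ℝ)]
  push_cast
  refine mul_le_mul_of_nonneg_left (exp_le_exp.mpr ?_) (by positivity)
  linarith [mul_le_mul_of_nonneg_left hfreq (by positivity : 0 ≤ π ^ 2 * s / 2)]

lemma summable_thetaCoeff (hs : 0 < s) : Summable (thetaCoeff s) := by
  simpa only [pow_zero, one_mul] using summable_pow_mul_thetaCoeff hs 0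

lemma abs_thetaMode_le (s : ℝ) (n : ℕ) (z : ℝ) : |thetaMode s n z| ≤ thetaCoeff s n := by
  rw [thetaMode, abs_mul, abs_of_pos (thetaCoeff_pos s n)]
  exact mul_le_of_le_one_right (thetaCoeff_pos s n).le (abs_cos_le_one _)

lemma summable_thetaMode (hs : 0 < s) (z : ℝ) : Summable fun n => thetaMode s n z :=
  (summable_thetaCoeff hs).of_norm_bounded fun n => abs_thetaMode_le s n z

lemma hasSum_thetaMode (hs : 0 < s) (z : ℝ) :
    HasSum (fun n => thetaMode s n z) (thetaFn z s - 1 / 2) := by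
  rw [thetaFn, add_sub_cancel_left]
  exact (summable_thetaMode hs z).hasSum

lemma hasDerivAt_thetaMode (s : ℝ) (n : ℕ) (z : ℝ) :
    HasDerivAt (thetaMode s n)
      (-(thetaCoeff s n * (π * ((n : ℝ) + 1)) * sin (π * ((n : ℝ) + 1) * z))) z :=
  ((hasDerivAt_const_mul (π * ((n : ℝ) + 1))).cos.const_mul _).congr_deriv (by ring)

lemma abs_sin_natCast_mul_le (n : ℕ) (x : ℝ) : |sin (n * x)| ≤ n * |sin x| := by
  induction n with
  | zero => simp
  | succ k ih =>
    push_cast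
    rw [add_mul, add_mul, one_mul, one_mul, sin_add]
    calc |sin (k * x) * cos x + cos (k * x) * sin x|
        ≤ |sin (k * x)| * |cos x| + |cos (k * x)| * |sin x| := by
          simpa only [abs_mul] using abs_add_le (sin (k * x) * cos x) (cos (k * x) * sin x)
      _ ≤ k * |sin x| + |sin x| := add_le_add
          ((mul_le_of_le_one_right (abs_nonneg _) (abs_cos_le_one _)).trans ih)
          (mul_le_of_le_one_left (abs_nonneg _) (abs_cos_le_one _))

lemma abs_sin_pi_mul_succ_mul_le (n : ℕ) (x : ℝ) :
    |sin (π * ((n : ℝ) + 1) * x)| ≤ ((n : ℝ) + 1) * |sin (π * x)| := by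
  have h := abs_sin_natCast_mul_le (n + 1) (π * x)
  rwa [Nat.cast_succ, mul_left_comm, ← mul_assoc] at h

lemma abs_deriv_thetaMode_le (s : ℝ) (n : ℕ) (z : ℝ) :
    |deriv (thetaMode s n) z| ≤ π * (((n : ℝ) + 1) ^ 2 * thetaCoeff s n) * |sin (π * z)| := by
  have hc := thetaCoeff_pos s n
  rw [(hasDerivAt_thetaMode s n z).deriv, abs_neg, abs_mul, abs_of_pos (by positivity)]
  calc thetaCoeff s n * (π * ((n : ℝ) + 1)) * |sin (π * ((n : ℝ) + 1) * z)|
      ≤ thetaCoeff s n * (π * ((n : ℝ) + 1)) * (((n : ℝ) + 1) * |sin (π * z)|) := by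
        gcongr
        exact abs_sin_pi_mul_succ_mul_le n z
    _ = π * (((n : ℝ) + 1) ^ 2 * thetaCoeff s n) * |sin (π * z)| := by ring

lemma hasDerivAt_thetaFn (hs : 0 < s) (x : ℝ) :
    HasDerivAt (fun z => thetaFn z s) (∑' n, deriv (thetaMode s n) x) x := by
  refine (hasDerivAt_tsum (y₀ := 0) ((summable_pow_mul_thetaCoeff hs 2).mul_left π)
    (fun n z => (hasDerivAt_thetaMode s n z).differentiableAt.hasDerivAt) (fun n z => ?_)
    (summable_thetaMode hs 0) x).const_add (1 / 2)
  have hc := thetaCoeff_pos s n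
  exact (abs_deriv_thetaMode_le s n z).trans
    (mul_le_of_le_one_right (by positivity) (abs_sin_le_one _))

lemma continuous_thetaFn (hs : 0 < s) : Continuous fun z => thetaFn z s :=
  continuous_iff_continuousAt.mpr fun x => (hasDerivAt_thetaFn hs x).continuousAt

lemma hasSum_deriv_thetaMode (hs : 0 < s) (x : ℝ) :
    HasSum (fun n => deriv (thetaMode s n) x) (deriv (fun z => thetaFn z s) x) := by
  rw [(hasDerivAt_thetaFn hs x).deriv]
  exact (((summable_pow_mul_thetaCoeff hs 2).mul_left π).mul_right |sin (π * x)|).of_norm_bounded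
    (fun n => abs_deriv_thetaMode_le s n x) |>.hasSum

lemma symmRemainder_thetaMode (s : ℝ) (n : ℕ) (x h : ℝ) :
    symmRemainder (thetaMode s n) x h = 2 * thetaCoeff s n * sin (π * ((n : ℝ) + 1) * x) *
      (sin (π * ((n : ℝ) + 1) * h) - π * ((n : ℝ) + 1) * h) := by
  rw [symmRemainder, (hasDerivAt_thetaMode s n x).deriv, thetaMode, thetaMode, mul_sub _ x h,
    mul_add _ x h, cos_sub, cos_add]
  ring

lemma abs_symmRemainder_thetaMode_le (s : ℝ) (n : ℕ) (x : ℝ) {h : ℝ} (hh : 0 ≤ h) :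
    |symmRemainder (thetaMode s n) x h| ≤
      π ^ 3 * (((n : ℝ) + 1) ^ 4 * thetaCoeff s n) * (|sin (π * x)| * h ^ 3) := by
  have hc := thetaCoeff_pos s n
  have hcubic : |sin (π * ((n : ℝ) + 1) * h) - π * ((n : ℝ) + 1) * h| ≤
      (π * ((n : ℝ) + 1) * h) ^ 3 / 6 := by
    have hfreq : 0 ≤ π * ((n : ℝ) + 1) * h := by positivity
    rw [abs_sub_comm, abs_of_nonneg (sub_nonneg.mpr (sin_le hfreq))]
    linarith [sin_ge_sub_cube hfreq]
  rw [symmRemainder_thetaMode, abs_mul, abs_mul, abs_of_pos (by positivity)]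
  calc 2 * thetaCoeff s n * |sin (π * ((n : ℝ) + 1) * x)| *
        |sin (π * ((n : ℝ) + 1) * h) - π * ((n : ℝ) + 1) * h|
      ≤ 2 * thetaCoeff s n * (((n : ℝ) + 1) * |sin (π * x)|) *
        ((π * ((n : ℝ) + 1) * h) ^ 3 / 6) := by
        gcongr
        exact abs_sin_pi_mul_succ_mul_le n x
    _ = π ^ 3 * (((n : ℝ) + 1) ^ 4 * thetaCoeff s n) * (|sin (π * x)| * h ^ 3) / 3 := by ring
    _ ≤ π ^ 3 * (((n : ℝ) + 1) ^ 4 * thetaCoeff s n) * (|sin (π * x)| * h ^ 3) :=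
        div_le_self (by positivity) (by norm_num)

lemma hasSum_symmRemainder_thetaMode (hs : 0 < s) (x h : ℝ) :
    HasSum (fun n => symmRemainder (thetaMode s n) x h)
      (symmRemainder (fun z => thetaFn z s) x h) := by
  rw [← symmRemainder_sub_const _ (1 / 2)]
  refine hasSum_symmRemainder (hasSum_thetaMode hs _) (hasSum_thetaMode hs _) ?_
  simpa only [deriv_sub_const] using hasSum_deriv_thetaMode hs x

lemma exp_mul_thetaCoeff_le {s₀ : ℝ} (h : s₀ ≤ s) (n : ℕ) :
    exp (π ^ 2 * s / 2) * thetaCoeff s n ≤ exp (π ^ 2 * s₀ / 2) * thetaCoeff s₀ n := by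
  rw [thetaCoeff, thetaCoeff, ← exp_add, ← exp_add, exp_le_exp]
  have hgap : 0 ≤ π ^ 2 * (((n : ℝ) + 1) ^ 2 - 1) / 2 := by
    have : 0 ≤ ((n : ℝ) + 1) ^ 2 - 1 := by nlinarith [n.cast_nonneg (α := ℝ)]
    positivity
  linarith [mul_le_mul_of_nonneg_left h hgap]

-- The factor `exp (π ^ 2 * s / 2)` cancels the decay of the lowest mode.
lemma exp_mul_abs_le_of_hasSum {s₀ S c B : ℝ} {k : ℕ} {f : ℕ → ℝ} (hs₀ : 0 < s₀) (hs : s₀ ≤ s)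
    (hc : 0 ≤ c) (hB : 0 ≤ B) (hf : HasSum f S)
    (hle : ∀ n : ℕ, |f n| ≤ c * (((n : ℝ) + 1) ^ k * thetaCoeff s n) * B) :
    exp (π ^ 2 * s / 2) * |S| ≤
      c * exp (π ^ 2 * s₀ / 2) * (∑' n : ℕ, ((n : ℝ) + 1) ^ k * thetaCoeff s₀ n) * B := by
  rw [← abs_of_pos (exp_pos (π ^ 2 * s / 2)), ← abs_mul]
  refine (hf.mul_left _).norm_le_of_bounded
    (((summable_pow_mul_thetaCoeff hs₀ k).hasSum.mul_left _).mul_right B) fun n => ?_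
  rw [norm_eq_abs, abs_mul, abs_of_pos (exp_pos _)]
  calc exp (π ^ 2 * s / 2) * |f n|
      ≤ exp (π ^ 2 * s / 2) * (c * (((n : ℝ) + 1) ^ k * thetaCoeff s n) * B) := by
        gcongr
        exact hle n
    _ = c * ((n : ℝ) + 1) ^ k * B * (exp (π ^ 2 * s / 2) * thetaCoeff s n) := by ring
    _ ≤ c * ((n : ℝ) + 1) ^ k * B * (exp (π ^ 2 * s₀ / 2) * thetaCoeff s₀ n) := by
        gcongr _ * ?_
        exact exp_mul_thetaCoeff_le hs n
    _ = c * exp (π ^ 2 * s₀ / 2) * (((n : ℝ) + 1) ^ k * thetaCoeff s₀ n) * B := by ring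

lemma exists_exp_mul_abs_thetaFn_le {s₀ : ℝ} (hs₀ : 0 < s₀) :
    ∃ K, 0 ≤ K ∧ ∀ s ≥ s₀, ∀ x : ℝ,
      exp (π ^ 2 * s / 2) * |deriv (fun z => thetaFn z s) x| ≤ K * |sin (π * x)| ∧
      ∀ h ≥ 0, exp (π ^ 2 * s / 2) * |symmRemainder (fun z => thetaFn z s) x h| ≤
        K * |sin (π * x)| * h ^ 3 := by
  have hnonneg : ∀ k : ℕ, 0 ≤ ∑' n : ℕ, ((n : ℝ) + 1) ^ k * thetaCoeff s₀ n := fun k =>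
    tsum_nonneg fun n => mul_nonneg (by positivity) (thetaCoeff_pos s₀ n).le
  refine ⟨max (π * exp (π ^ 2 * s₀ / 2) * ∑' n : ℕ, ((n : ℝ) + 1) ^ 2 * thetaCoeff s₀ n)
    (π ^ 3 * exp (π ^ 2 * s₀ / 2) * ∑' n : ℕ, ((n : ℝ) + 1) ^ 4 * thetaCoeff s₀ n),
    le_max_of_le_left (mul_nonneg (by positivity) (hnonneg 2)), fun s hs x => ⟨?_, fun h hh => ?_⟩⟩
  · refine (exp_mul_abs_le_of_hasSum hs₀ hs pi_nonneg (abs_nonneg (sin (π * x)))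
      (hasSum_deriv_thetaMode (hs₀.trans_le hs) x)
      fun n => abs_deriv_thetaMode_le s n x).trans ?_
    gcongr
    exact le_max_left _ _
  · refine (exp_mul_abs_le_of_hasSum hs₀ hs (by positivity)
      (by positivity : 0 ≤ |sin (π * x)| * h ^ 3)
      (hasSum_symmRemainder_thetaMode (hs₀.trans_le hs) x h)
      fun n => abs_symmRemainder_thetaMode_le s n x hh).trans ?_
    rw [← mul_assoc]
    gcongr
    exact le_max_right _ _

end FourierSeries

section GaussianImages

/-- The `k`-th term of the `2`-periodisation of the centred Gaussian density of variance `v`; by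
Poisson summation these terms add up to `thetaFn`. -/
noncomputable def gaussianImage (v : NNReal) (k : ℤ) (z : ℝ) : ℝ :=
  ProbabilityTheory.gaussianPDFReal 0 v (z + 2 * k)

variable {v : NNReal} {δ : ℝ}

lemma two_mul_thetaFn_eq_cosKernel {s : ℝ} (hs : 0 < s) (z : ℝ) :
    2 * thetaFn z s = HurwitzZeta.cosKernel ((z / 2 : ℝ) : UnitAddCircle) (π * s / 2) := by
  have hmode : HasSum (fun n => 2 * thetaMode s n z)
      (HurwitzZeta.cosKernel ((z / 2 : ℝ) : UnitAddCircle) (π * s / 2) - 1) := by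
    refine (HurwitzZeta.hasSum_nat_cosKernel₀ (z / 2) (by positivity)).congr_fun fun n => ?_
    rw [thetaMode, thetaCoeff]
    ring_nf
  linarith [hmode.unique ((hasSum_thetaMode hs z).mul_left 2)]

lemma hasSum_gaussianImage (hv : v ≠ 0) (z : ℝ) :
    HasSum (fun k => gaussianImage v k z) (thetaFn z v) := by
  have hv' : (0 : ℝ) < v := NNReal.coe_pos.mpr (pos_iff_ne_zero.mpr hv)
  have hker := HurwitzZeta.evenKernel_functional_equation ((z / 2 : ℝ) : UnitAddCircle)
    (1 / (π * v / 2))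
  rw [one_div_one_div, ← two_mul_thetaFn_eq_cosKernel hv', ← sqrt_eq_rpow] at hker
  have hθ : thetaFn z v = (√(2 * π * v))⁻¹ *
      HurwitzZeta.evenKernel ((z / 2 : ℝ) : UnitAddCircle) (1 / (π * v / 2)) := by
    have hsqrt : √(1 / (π * v / 2)) = 2 * (√(2 * π * v))⁻¹ := by
      rw [← sqrt_inv, ← sqrt_sq (zero_le_two (α := ℝ)), ← sqrt_mul (by positivity)]
      congr 1
      field_simp
      norm_num
    rw [hker, hsqrt]
    have : √(2 * π * v) ≠ 0 := by positivity
    field_simp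
  rw [hθ]
  refine ((HurwitzZeta.hasSum_int_evenKernel (z / 2) (by positivity)).mul_left _).congr_fun
    fun k => ?_
  rw [gaussianImage, ProbabilityTheory.gaussianPDFReal]
  congr 2
  field_simp
  ring

lemma thetaFn_nonneg {s : ℝ} (hs : 0 < s) (z : ℝ) : 0 ≤ thetaFn z s := by
  lift s to NNReal using hs.le
  exact (hasSum_gaussianImage (by exact_mod_cast hs.ne') z).nonneg fun k =>
    ProbabilityTheory.gaussianPDFReal_nonneg 0 s _

lemma contDiff_gaussianImage (v : NNReal) (k : ℤ) {n : WithTop ℕ∞} :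
    ContDiff ℝ n (gaussianImage v k) :=
  (contDiff_gaussianPDFReal v).comp (contDiff_id.add contDiff_const)

lemma iteratedDeriv_gaussianImage (n : ℕ) (v : NNReal) (k : ℤ) (z : ℝ) :
    iteratedDeriv n (gaussianImage v k) z =
      iteratedDeriv n (ProbabilityTheory.gaussianPDFReal 0 v) (z + 2 * k) :=
  congrFun (iteratedDeriv_comp_add_const n _ _) z

lemma mul_one_add_abs_le_abs_add_two_mul {z : ℝ} (hδ : 0 ≤ δ) (hz : z ∈ Icc δ (2 - δ)) (k : ℤ) :
    δ / 2 * (1 + |(k : ℝ)|) ≤ |z + 2 * k| := by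
  obtain ⟨hz₁, hz₂⟩ := hz
  have hδ₁ : δ ≤ 1 := by linarith
  rcases le_or_gt 0 k with hk | hk
  · have hk' : (0 : ℝ) ≤ k := by exact_mod_cast hk
    rw [abs_of_nonneg hk']
    refine le_trans ?_ (le_abs_self _)
    nlinarith [hδ₁]
  · have hk' : (k : ℝ) ≤ -1 := by exact_mod_cast Int.le_sub_one_of_lt hk
    rw [abs_of_neg (by linarith)]
    refine le_trans ?_ (neg_le_abs _)
    nlinarith

lemma summable_one_div_one_add_abs_sq : Summable fun k : ℤ => 1 / (1 + |(k : ℝ)|) ^ 2 := by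
  have hnat : Summable fun n : ℕ => 1 / (1 + (n : ℝ)) ^ 2 := by
    simpa only [Nat.cast_add, Nat.cast_one, add_comm] using
      (summable_nat_add_iff 1).mpr (summable_one_div_nat_pow.mpr one_lt_two)
  refine Summable.of_nat_of_neg ?_ ?_ <;>
    simpa only [Int.cast_neg, Int.cast_natCast, abs_neg, Nat.abs_cast] using hnat

-- The bound is uniform in the variance because `z + 2 * k` stays away from `0`.
lemma exists_abs_iteratedDeriv_gaussianImage_le (n : ℕ) (hδ : 0 < δ) :
    ∃ M, 0 ≤ M ∧ ∀ v, ∀ z ∈ Icc δ (2 - δ), ∀ k : ℤ,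
      |iteratedDeriv (n + 1) (gaussianImage v k) z| ≤ M * (1 / (1 + |(k : ℝ)|) ^ 2) := by
  obtain ⟨C, hC⟩ := exists_abs_pow_mul_iteratedDeriv_gaussianPDFReal_le (n + 1)
  have hC₀ : 0 ≤ C := (abs_nonneg _).trans (hC 0 0)
  refine ⟨C / (δ / 2) ^ (n + 2), by positivity, fun v z hz k => ?_⟩
  have hpow : ((δ / 2) ^ (n + 2) * (1 + |(k : ℝ)|) ^ 2) ≤ |z + 2 * k| ^ (n + 2) := by
    calc (δ / 2) ^ (n + 2) * (1 + |(k : ℝ)|) ^ 2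
        ≤ (δ / 2) ^ (n + 2) * (1 + |(k : ℝ)|) ^ (n + 2) := by
          gcongr
          · linarith [abs_nonneg (k : ℝ)]
          · omega
      _ = (δ / 2 * (1 + |(k : ℝ)|)) ^ (n + 2) := (mul_pow _ _ _).symm
      _ ≤ |z + 2 * k| ^ (n + 2) := by
          gcongr
          exact mul_one_add_abs_le_abs_add_two_mul hδ.le hz k
  rw [iteratedDeriv_gaussianImage, mul_one_div, div_div, le_div_iff₀ (by positivity), mul_comm]
  refine (mul_le_mul_of_nonneg_right hpow (abs_nonneg _)).trans ?_
  simpa only [abs_mul, abs_pow] using hC v (z + 2 * k)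

lemma hasSum_deriv_gaussianImage (hv : v ≠ 0) {x : ℝ} (hx : x ∈ Ioo 0 2) :
    HasSum (fun k => deriv (gaussianImage v k) x) (deriv (fun z => thetaFn z v) x) := by
  obtain ⟨δ, hδ, hδx⟩ := exists_between (lt_min hx.1 (sub_pos.mpr hx.2))
  obtain ⟨M, -, hM⟩ := exists_abs_iteratedDeriv_gaussianImage_le 0 hδ
  have hxδ : x ∈ Ioo δ (2 - δ) :=
    ⟨hδx.trans_le (min_le_left _ _), by linarith [hδx.trans_le (min_le_right x (2 - x))]⟩
  have hbound : ∀ (k : ℤ), ∀ z ∈ Ioo δ (2 - δ),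
      ‖deriv (gaussianImage v k) z‖ ≤ M * (1 / (1 + |(k : ℝ)|) ^ 2) := fun k z hz => by
    simpa only [zero_add, iteratedDeriv_one, norm_eq_abs] using hM v z (Ioo_subset_Icc_self hz) k
  have hsummable := summable_one_div_one_add_abs_sq.mul_left M
  have hθ : (fun z => thetaFn z v) = fun z => ∑' k, gaussianImage v k z :=
    funext fun z => (hasSum_gaussianImage hv z).tsum_eq.symm
  rw [hθ, (hasDerivAt_tsum_of_isPreconnected hsummable isOpen_Ioo isPreconnected_Ioo
    (fun k z _ => ((contDiff_gaussianImage v k).differentiable one_ne_zero z).hasDerivAt)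
    hbound hxδ (hasSum_gaussianImage hv x).summable hxδ).deriv]
  exact (hsummable.of_norm_bounded fun k => hbound k x hxδ).hasSum

lemma exists_abs_thetaFn_le_of_mem_Icc (hδ : 0 < δ) :
    ∃ K, 0 ≤ K ∧ ∀ s > 0,
      (∀ x ∈ Icc δ (2 - δ), |deriv (fun z => thetaFn z s) x| ≤ K) ∧
      ∀ x h, 0 ≤ h → δ ≤ x - h → x + h ≤ 2 - δ →
        |symmRemainder (fun z => thetaFn z s) x h| ≤ K * h ^ 3 := by
  obtain ⟨M₁, hM₁, hbound₁⟩ := exists_abs_iteratedDeriv_gaussianImage_le 0 hδ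
  obtain ⟨M₃, hM₃, hbound₃⟩ := exists_abs_iteratedDeriv_gaussianImage_le 2 hδ
  have hmem : ∀ {x : ℝ}, x ∈ Icc δ (2 - δ) → x ∈ Ioo 0 2 := fun hx =>
    ⟨by linarith [hx.1], by linarith [hx.2]⟩
  set S := ∑' k : ℤ, 1 / (1 + |(k : ℝ)|) ^ 2
  have hS : HasSum (fun k : ℤ => 1 / (1 + |(k : ℝ)|) ^ 2) S :=
    summable_one_div_one_add_abs_sq.hasSum
  have hS₀ : 0 ≤ S := hS.nonneg fun k => by positivity
  refine ⟨(M₁ + M₃) * S, by positivity, fun s hs => ?_⟩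
  lift s to NNReal using hs.le
  have hs₀ : s ≠ 0 := by exact_mod_cast hs.ne'
  refine ⟨fun x hx => ?_, fun x h hh hsub hadd => ?_⟩
  · refine ((hasSum_deriv_gaussianImage hs₀ (hmem hx)).norm_le_of_bounded (hS.mul_left M₁)
      fun k => ?_).trans (mul_le_mul_of_nonneg_right (by linarith) hS₀)
    simpa only [zero_add, iteratedDeriv_one, norm_eq_abs] using hbound₁ s x hx k
  · have hx : x ∈ Icc δ (2 - δ) := ⟨by linarith, by linarith⟩
    refine ((hasSum_symmRemainder (hasSum_gaussianImage hs₀ _) (hasSum_gaussianImage hs₀ _)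
      (hasSum_deriv_gaussianImage hs₀ (hmem hx))).norm_le_of_bounded
      ((hS.mul_left M₃).mul_right (h ^ 3)) fun k => ?_).trans (by gcongr; linarith)
    exact abs_symmRemainder_le (contDiff_gaussianImage s k) hh fun z hz =>
      hbound₃ s z ⟨hsub.trans hz.1, hz.2.trans hadd⟩ k

end GaussianImages

section KilledKernel

variable {a t : ℝ}

lemma integral_thetaMode (s : ℝ) (n : ℕ) (x : ℝ) :
    ∫ z in (x - 1)..(x + 1), thetaMode s n z = 0 := by
  have hfreq : π * ((n : ℝ) + 1) ≠ 0 := by positivity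
  have hperiod : sin (π * ((n : ℝ) + 1) * (x + 1)) = sin (π * ((n : ℝ) + 1) * (x - 1)) := by
    rw [← sin_add_nat_mul_two_pi (π * ((n : ℝ) + 1) * (x - 1)) (n + 1)]
    congr 1
    push_cast
    ring
  simp only [thetaMode]
  rw [intervalIntegral.integral_const_mul, intervalIntegral.integral_comp_mul_left _ hfreq,
    integral_cos, hperiod, sub_self, smul_zero, mul_zero]

lemma integral_thetaFn {s : ℝ} (hs : 0 < s) (x : ℝ) :
    ∫ z in (x - 1)..(x + 1), thetaFn z s = 1 := by
  have hmodes := intervalIntegral.hasSum_integral_of_dominated_convergence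
    (a := x - 1) (b := x + 1) (μ := volume) (fun n _ => thetaCoeff s n)
    (fun n => (continuous_iff_continuousAt.mpr fun z =>
      (hasDerivAt_thetaMode s n z).continuousAt).aestronglyMeasurable)
    (fun n => ae_of_all _ fun z _ => abs_thetaMode_le s n z)
    (ae_of_all _ fun _ _ => summable_thetaCoeff hs) intervalIntegrable_const
    (ae_of_all _ fun z _ => hasSum_thetaMode hs z)
  simp only [integral_thetaMode] at hmodes
  have hzero := hmodes.unique hasSum_zero
  rw [intervalIntegral.integral_sub ((continuous_thetaFn hs).intervalIntegrable _ _)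
    intervalIntegrable_const, intervalIntegral.integral_const, smul_eq_mul] at hzero
  linarith

lemma pker_eq_thetaFn_sub (ha : 0 < a) (ht : 0 < t) (x y : ℝ) :
    pker a t x y =
      1 / a * (thetaFn (x / a - y / a) (t / a ^ 2) - thetaFn (x / a + y / a) (t / a ^ 2)) := by
  have hs : 0 < t / a ^ 2 := by positivity
  have hmode : ∀ n, thetaMode (t / a ^ 2) n (x / a - y / a) -
      thetaMode (t / a ^ 2) n (x / a + y / a) =
        2 * (exp (-(π ^ 2) * ((n : ℝ) + 1) ^ 2 * t / (2 * a ^ 2)) *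
          sin (π * ((n : ℝ) + 1) * x / a) * sin (π * ((n : ℝ) + 1) * y / a)) := fun n => by
    have hcoeff : thetaCoeff (t / a ^ 2) n =
        exp (-(π ^ 2) * ((n : ℝ) + 1) ^ 2 * t / (2 * a ^ 2)) := by
      rw [thetaCoeff]
      congr 1
      ring
    rw [thetaMode, thetaMode, mul_sub _ (x / a), mul_add _ (x / a), cos_sub, cos_add, hcoeff,
      mul_div_assoc (π * ((n : ℝ) + 1)) x, mul_div_assoc (π * ((n : ℝ) + 1)) y]
    ring
  have hsum := (hasSum_thetaMode hs (x / a - y / a)).sub (hasSum_thetaMode hs (x / a + y / a))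
  rw [sub_sub_sub_cancel_right] at hsum
  rw [← hsum.tsum_eq, pker]
  simp only [hmode, tsum_mul_left]
  ring

lemma continuous_pker (ha : 0 < a) (ht : 0 < t) (x : ℝ) : Continuous (pker a t x) := by
  have hθ := continuous_thetaFn (by positivity : 0 < t / a ^ 2)
  rw [funext (pker_eq_thetaFn_sub ha ht x)]
  exact continuous_const.mul
    ((hθ.comp (by fun_prop : Continuous fun y => x / a - y / a)).sub
      (hθ.comp (by fun_prop : Continuous fun y => x / a + y / a)))

lemma abs_pker_le (ha : 0 < a) (ht : 0 < t) (x y : ℝ) :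
    |pker a t x y| ≤
      1 / a * (thetaFn (x / a - y / a) (t / a ^ 2) + thetaFn (x / a + y / a) (t / a ^ 2)) := by
  have hs : 0 < t / a ^ 2 := by positivity
  rw [pker_eq_thetaFn_sub ha ht, abs_mul, abs_of_pos (by positivity : 0 < 1 / a)]
  gcongr
  have hnonneg := thetaFn_nonneg hs
  exact abs_sub_le_iff.mpr
    ⟨by linarith [hnonneg (x / a + y / a)], by linarith [hnonneg (x / a - y / a)]⟩

-- The two images of `[0, a]` together cover one period of `θ`, over which it has mass `1`.
lemma integral_abs_pker_le_one {b : ℝ} (ha : 0 < a) (ht : 0 < t) (hb : 0 ≤ b) (hba : b ≤ a)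
    (x : ℝ) : ∫ y in b..a, |pker a t x y| ≤ 1 := by
  have hs : 0 < t / a ^ 2 := by positivity
  have hθ := continuous_thetaFn hs
  have hsub : Continuous fun y => thetaFn (x / a - y / a) (t / a ^ 2) :=
    hθ.comp (by fun_prop : Continuous fun y => x / a - y / a)
  have hadd : Continuous fun y => thetaFn (x / a + y / a) (t / a ^ 2) :=
    hθ.comp (by fun_prop : Continuous fun y => x / a + y / a)
  have habs := (continuous_pker ha ht x).abs
  calc ∫ y in b..a, |pker a t x y|
      ≤ ∫ y in 0..a, |pker a t x y| :=
        intervalIntegral.integral_mono_interval hb hba le_rfl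
          (ae_of_all _ fun y => abs_nonneg _) (habs.intervalIntegrable _ _)
    _ ≤ ∫ y in 0..a, 1 / a *
          (thetaFn (x / a - y / a) (t / a ^ 2) + thetaFn (x / a + y / a) (t / a ^ 2)) :=
        intervalIntegral.integral_mono_on ha.le (habs.intervalIntegrable _ _)
          ((continuous_const.mul (hsub.add hadd)).intervalIntegrable _ _)
          fun y _ => abs_pker_le ha ht x y
    _ = ∫ z in (x / a - 1)..(x / a + 1), thetaFn z (t / a ^ 2) := by
        rw [intervalIntegral.integral_const_mul,
          intervalIntegral.integral_add (hsub.intervalIntegrable _ _) (hadd.intervalIntegrable _ _),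
          intervalIntegral.integral_comp_sub_div (fun z => thetaFn z (t / a ^ 2)) ha.ne',
          intervalIntegral.integral_comp_add_div (fun z => thetaFn z (t / a ^ 2)) ha.ne',
          div_self ha.ne', zero_div, sub_zero, add_zero, ← smul_add,
          intervalIntegral.integral_add_adjacent_intervals (hθ.intervalIntegrable _ _)
            (hθ.intervalIntegrable _ _), smul_eq_mul, one_div, inv_mul_cancel_left₀ ha.ne']
    _ = 1 := integral_thetaFn hs (x / a)

end KilledKernel

section ExponentialMoments

/-- The profile `(1 + m r) (1 + r²) e^{-m r}` of the error term in the first-moment formula. -/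
noncomputable def momentWeight (m r : ℝ) : ℝ :=
  (1 + m * r) * (1 + r ^ 2) * exp (-(m * r))

variable {m r b : ℝ}

lemma momentWeight_pos (hm : 0 ≤ m) (hr : 0 ≤ r) : 0 < momentWeight m r := by
  unfold momentWeight
  positivity

lemma one_add_mul_mul_exp_neg_le_momentWeight (hm : 0 ≤ m) (hr : 0 ≤ r) :
    (1 + m * r) * exp (-(m * r)) ≤ momentWeight m r := by
  rw [momentWeight, mul_right_comm]
  exact le_mul_of_one_le_right (by positivity) (by linarith [sq_nonneg r])

lemma exp_neg_le_momentWeight (hm : 0 ≤ m) (hr : 0 ≤ r) : exp (-(m * r)) ≤ momentWeight m r :=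
  (le_mul_of_one_le_left (exp_pos _).le (by linarith [mul_nonneg hm hr])).trans
    (one_add_mul_mul_exp_neg_le_momentWeight hm hr)

lemma one_add_pow_three_mul_exp_neg_le {v : ℝ} (hv : 0 ≤ v) : (1 + v) ^ 3 * exp (-v) ≤ 18 := by
  have hpow : (1 + v) ^ 3 ≤ exp (1 + v) * 6 := by
    simpa [Nat.factorial] using
      (div_le_iff₀ (by positivity)).mp (pow_div_factorial_le_exp (1 + v) (by positivity) 3)
  calc (1 + v) ^ 3 * exp (-v) ≤ exp (1 + v) * 6 * exp (-v) := by gcongr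
    _ = 6 * exp 1 := by rw [mul_right_comm, ← exp_add, add_neg_cancel_right, mul_comm]
    _ ≤ 18 := by linarith [exp_one_lt_three]

lemma momentWeight_le (hm : 1 / 2 ≤ m) (hr : 0 ≤ r) (hrb : r ≤ b) :
    momentWeight m b ≤ 144 * momentWeight m r := by
  obtain ⟨u, hu, rfl⟩ : ∃ u, 0 ≤ u ∧ b = r + u := ⟨b - r, by linarith, by ring⟩
  have hmu : 0 ≤ m * u := by positivity
  have hlinear : 1 + m * (r + u) ≤ (1 + m * r) * (1 + m * u) := by
    linarith [mul_nonneg (by positivity : 0 ≤ m * r) hmu]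
  have hquadratic : 1 + (r + u) ^ 2 ≤ (1 + r ^ 2) * (8 * (1 + m * u) ^ 2) := by
    have hu_le : 1 + u ^ 2 ≤ 4 * (1 + m * u) ^ 2 := by
      nlinarith [pow_le_pow_left₀ hu (by nlinarith : u ≤ 2 * (m * u)) 2]
    calc 1 + (r + u) ^ 2 ≤ 2 * (1 + r ^ 2) * (1 + u ^ 2) := by
          nlinarith [sq_nonneg (r - u), mul_nonneg (sq_nonneg r) (sq_nonneg u)]
      _ ≤ 2 * (1 + r ^ 2) * (4 * (1 + m * u) ^ 2) := by gcongr
      _ = (1 + r ^ 2) * (8 * (1 + m * u) ^ 2) := by ring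
  calc momentWeight m (r + u)
      ≤ (1 + m * r) * (1 + m * u) * ((1 + r ^ 2) * (8 * (1 + m * u) ^ 2)) *
          exp (-(m * (r + u))) := by
        unfold momentWeight
        gcongr
    _ = 8 * momentWeight m r * ((1 + m * u) ^ 3 * exp (-(m * u))) := by
        rw [momentWeight, mul_add m r u, neg_add, exp_add]
        ring
    _ ≤ 8 * momentWeight m r * 18 := by
        have := momentWeight_pos (by linarith : 0 ≤ m) hr
        gcongr
        exact one_add_pow_three_mul_exp_neg_le hmu
    _ = 144 * momentWeight m r := by ring

lemma hasDerivAt_neg_mul_exp_neg_mul {q : ℝ → ℝ} {q' y : ℝ} (hq : HasDerivAt q q' y) (m : ℝ) :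
    HasDerivAt (fun y => -(q y * exp (-(m * y)))) (exp (-(m * y)) * (m * q y - q')) y := by
  have hexp : HasDerivAt (fun y => exp (-(m * y))) (exp (-(m * y)) * -m) y :=
    (hasDerivAt_const_mul m).neg.exp
  exact (hq.mul hexp).neg.congr_deriv (by ring)

lemma integral_exp_neg_mul_mul_id (hm : m ≠ 0) (r b : ℝ) :
    ∫ y in r..b, exp (-(m * y)) * y =
      ((1 + m * r) * exp (-(m * r)) - (1 + m * b) * exp (-(m * b))) / m ^ 2 := by
  have hderiv : ∀ y, HasDerivAt (fun y => -((1 + m * y) / m ^ 2 * exp (-(m * y))))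
      (exp (-(m * y)) * y) y := fun y => by
    have hq : HasDerivAt (fun y => (1 + m * y) / m ^ 2) (m / m ^ 2) y :=
      ((hasDerivAt_const_mul m).const_add 1).div_const (m ^ 2)
    refine (hasDerivAt_neg_mul_exp_neg_mul hq m).congr_deriv ?_
    field_simp
    ring
  rw [intervalIntegral.integral_eq_sub_of_hasDerivAt (fun y _ => hderiv y)
    ((by fun_prop : Continuous fun y => exp (-(m * y)) * y).intervalIntegrable _ _)]
  ring

lemma integral_exp_neg_mul_mul_pow_three (hm : m ≠ 0) (r b : ℝ) :
    ∫ y in r..b, exp (-(m * y)) * y ^ 3 =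
      ((6 + 6 * (m * r) + 3 * (m * r) ^ 2 + (m * r) ^ 3) * exp (-(m * r)) -
        (6 + 6 * (m * b) + 3 * (m * b) ^ 2 + (m * b) ^ 3) * exp (-(m * b))) / m ^ 4 := by
  have hderiv : ∀ y, HasDerivAt
      (fun y => -((6 + 6 * (m * y) + 3 * (m * y) ^ 2 + (m * y) ^ 3) / m ^ 4 * exp (-(m * y))))
      (exp (-(m * y)) * y ^ 3) y := fun y => by
    have hlin : HasDerivAt (fun y => m * y) m y := hasDerivAt_const_mul m
    have hq := (((((hlin.const_mul 6).const_add 6).add ((hlin.pow 2).const_mul 3)).add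
      (hlin.pow 3)).div_const (m ^ 4))
    refine (hasDerivAt_neg_mul_exp_neg_mul hq m).congr_deriv ?_
    simp only [Pi.add_apply, Pi.pow_apply]
    field_simp
    ring
  rw [intervalIntegral.integral_eq_sub_of_hasDerivAt (fun y _ => hderiv y)
    ((by fun_prop : Continuous fun y => exp (-(m * y)) * y ^ 3).intervalIntegrable _ _)]
  ring

lemma integral_exp_neg_mul_mul_pow_three_le (hm : 1 / 2 ≤ m) (hr : 0 ≤ r) (hrb : r ≤ b) :
    ∫ y in r..b, exp (-(m * y)) * y ^ 3 ≤ 96 * momentWeight m r := by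
  have hm₀ : 0 < m := by linarith
  have hb : 0 ≤ b := hr.trans hrb
  have hm₂ : 1 ≤ 4 * m ^ 2 := by nlinarith
  have hm₄ : 1 ≤ 16 * m ^ 4 := by nlinarith
  have hpoly : 6 + 6 * (m * r) + 3 * (m * r) ^ 2 + (m * r) ^ 3 ≤
      96 * ((1 + m * r) * (1 + r ^ 2)) * m ^ 4 := by
    nlinarith [mul_le_mul_of_nonneg_left hm₂ (by positivity : 0 ≤ (m * r) ^ 3),
      mul_le_mul_of_nonneg_left hm₂ (by positivity : 0 ≤ (m * r) ^ 2),
      mul_le_mul_of_nonneg_left hm₄ (by positivity : 0 ≤ m * r),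
      (by positivity : 0 ≤ r ^ 3 * m ^ 5), (by positivity : 0 ≤ r ^ 2 * m ^ 4)]
  rw [integral_exp_neg_mul_mul_pow_three hm₀.ne', div_le_iff₀ (by positivity)]
  calc (6 + 6 * (m * r) + 3 * (m * r) ^ 2 + (m * r) ^ 3) * exp (-(m * r)) -
        (6 + 6 * (m * b) + 3 * (m * b) ^ 2 + (m * b) ^ 3) * exp (-(m * b))
      ≤ (6 + 6 * (m * r) + 3 * (m * r) ^ 2 + (m * r) ^ 3) * exp (-(m * r)) :=
        sub_le_self _ (by positivity)
    _ ≤ 96 * ((1 + m * r) * (1 + r ^ 2)) * m ^ 4 * exp (-(m * r)) := by gcongr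
    _ = 96 * momentWeight m r * m ^ 4 := by
        rw [momentWeight]
        ring

lemma abs_integral_exp_neg_mul_sub_le {A K : ℝ} {P : ℝ → ℝ} (hm : 1 / 2 ≤ m) (hr : 0 ≤ r)
    (hrb : r ≤ b) (hK : 0 ≤ K) (hP : Continuous P)
    (hcubic : ∀ y ∈ Icc r b, |P y - A * y| ≤ K * y ^ 3) :
    |(∫ y in r..b, exp (-(m * y)) * P y) -
        A * (((1 + m * r) * exp (-(m * r)) - (1 + m * b) * exp (-(m * b))) / m ^ 2)| ≤
      96 * K * momentWeight m r := by
  have hsplit : (∫ y in r..b, exp (-(m * y)) * P y) - A * ∫ y in r..b, exp (-(m * y)) * y =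
      ∫ y in r..b, exp (-(m * y)) * (P y - A * y) := by
    rw [← intervalIntegral.integral_const_mul, ← intervalIntegral.integral_sub
      ((by fun_prop : Continuous fun y => exp (-(m * y)) * P y).intervalIntegrable _ _)
      ((by fun_prop : Continuous fun y => A * (exp (-(m * y)) * y)).intervalIntegrable _ _)]
    simp only [mul_sub, mul_left_comm A]
  rw [← integral_exp_neg_mul_mul_id (by linarith), hsplit]
  calc |∫ y in r..b, exp (-(m * y)) * (P y - A * y)|
      ≤ ∫ y in r..b, K * (exp (-(m * y)) * y ^ 3) := by
        rw [← norm_eq_abs]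
        refine intervalIntegral.norm_integral_le_of_norm_le hrb (ae_of_all _ fun y hy => ?_)
          ((by fun_prop : Continuous fun y => K * (exp (-(m * y)) * y ^ 3)).intervalIntegrable _ _)
        rw [norm_eq_abs, abs_mul, abs_of_pos (exp_pos _), mul_left_comm]
        exact mul_le_mul_of_nonneg_left (hcubic y (Ioc_subset_Icc_self hy)) (exp_pos _).le
    _ ≤ K * (96 * momentWeight m r) := by
        rw [intervalIntegral.integral_const_mul]
        gcongr
        exact integral_exp_neg_mul_mul_pow_three_le hm hr hrb
    _ = 96 * K * momentWeight m r := by ring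

lemma one_add_mul_mul_exp_neg_le_div_sq {a L : ℝ} (ha : 0 < a) (hm : 1 / 2 ≤ m) (hr : 0 ≤ r)
    (hrb : r ≤ b) (haL : a ≤ L * b) :
    (1 + m * b) * exp (-(m * b)) ≤ 144 * L ^ 2 * momentWeight m r / a ^ 2 := by
  have hmb : 0 ≤ 1 + m * b := by linarith [mul_nonneg (by linarith : 0 ≤ m) (hr.trans hrb)]
  have hab : a ^ 2 ≤ L ^ 2 * (1 + b ^ 2) := by
    nlinarith [pow_le_pow_left₀ ha.le haL 2, sq_nonneg L]
  rw [le_div_iff₀ (by positivity)]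
  calc (1 + m * b) * exp (-(m * b)) * a ^ 2
      ≤ (1 + m * b) * exp (-(m * b)) * (L ^ 2 * (1 + b ^ 2)) :=
        mul_le_mul_of_nonneg_left hab (mul_nonneg hmb (exp_pos _).le)
    _ = L ^ 2 * momentWeight m b := by rw [momentWeight]; ring
    _ ≤ L ^ 2 * (144 * momentWeight m r) := by
        gcongr
        exact momentWeight_le hm hr hrb
    _ = 144 * L ^ 2 * momentWeight m r := by ring

-- Replacing `1 / m ^ 2` by `1` and dropping the endpoint `b` both cost a relative `O(a⁻²)`.
lemma abs_linear_moment_sub_le {a A K L : ℝ} (ha : 0 < a) (hm : 1 / 2 ≤ m)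
    (hma : 1 - m ^ 2 = π ^ 2 / a ^ 2) (hr : 0 ≤ r) (hrb : r ≤ b) (haL : a ≤ L * b)
    (hA : |A| ≤ K / a ^ 2) :
    |A * (((1 + m * r) * exp (-(m * r)) - (1 + m * b) * exp (-(m * b))) / m ^ 2) -
        A * ((1 + m * r) * exp (-(m * r)))| ≤
      (40 + 576 * L ^ 2) * K * momentWeight m r / a ^ 4 := by
  have hm₀ : 0 < m := by linarith
  have hb : 0 ≤ b := hr.trans hrb
  have hK : 0 ≤ K := by
    have := (abs_nonneg A).trans hA
    rwa [le_div_iff₀ (by positivity), zero_mul] at this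
  have hinv : 1 / m ^ 2 ≤ 4 := by
    rw [div_le_iff₀ (by positivity)]
    nlinarith
  have hpi : π ^ 2 ≤ 10 := by nlinarith [pi_pos, pi_lt_d2]
  have hdecomp : A * (((1 + m * r) * exp (-(m * r)) - (1 + m * b) * exp (-(m * b))) / m ^ 2) -
      A * ((1 + m * r) * exp (-(m * r))) =
      A * (1 / m ^ 2) * (π ^ 2 / a ^ 2 * ((1 + m * r) * exp (-(m * r))) -
        (1 + m * b) * exp (-(m * b))) := by
    rw [← hma]
    field_simp
    ring
  have hendpoint := one_add_mul_mul_exp_neg_le_div_sq ha hm hr hrb haL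
  have hstart : π ^ 2 / a ^ 2 * ((1 + m * r) * exp (-(m * r))) ≤
      10 * momentWeight m r / a ^ 2 := by
    rw [div_mul_eq_mul_div]
    gcongr
    exact one_add_mul_mul_exp_neg_le_momentWeight hm₀.le hr
  rw [hdecomp, abs_mul, abs_mul, abs_of_pos (by positivity : 0 < 1 / m ^ 2)]
  calc |A| * (1 / m ^ 2) * |π ^ 2 / a ^ 2 * ((1 + m * r) * exp (-(m * r))) -
        (1 + m * b) * exp (-(m * b))|
      ≤ K / a ^ 2 * 4 * (10 * momentWeight m r / a ^ 2 +
          144 * L ^ 2 * momentWeight m r / a ^ 2) := by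
        gcongr
        refine (abs_sub _ _).trans (add_le_add ?_ ?_)
        · rwa [abs_of_nonneg (by positivity)]
        · rwa [abs_of_nonneg (by positivity)]
    _ = (40 + 576 * L ^ 2) * K * momentWeight m r / a ^ 4 := by
        field_simp
        ring

end ExponentialMoments

section FirstMoment

/-- The density `pdens` without its drift factor `e^{μ (x - y)}`: the killed heat kernel
multiplied by its exponential growth factor. -/
noncomputable def growthKernel (a t x y : ℝ) : ℝ :=
  exp (π ^ 2 * t / (2 * a ^ 2)) * pker a t x y

/-- The coefficient `-(2 e^{π² t / (2 a²)} / a²) θ'(x/a, t/a²)` of the linear approximation of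
`growthKernel a t x` at the absorbing boundary point `0`. -/
noncomputable def growthSlope (a t x : ℝ) : ℝ :=
  -(2 * exp (π ^ 2 * t / (2 * a ^ 2)) / a ^ 2) * deriv (fun z => thetaFn z (t / a ^ 2)) (x / a)

/-- The error in the first-moment formula over `[r, b]` for drift `-m`, divided by the common
factor `e^{m x}`. -/
noncomputable def firstMomentError (m a t x r b : ℝ) : ℝ :=
  (∫ y in r..b, exp (-(m * y)) * growthKernel a t x y) -
    growthSlope a t x * ((1 + m * r) * exp (-(m * r)))

variable {a t x r b m K L : ℝ}

lemma continuous_growthKernel (ha : 0 < a) (ht : 0 < t) (x : ℝ) : Continuous (growthKernel a t x) :=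
  continuous_const.mul (continuous_pker ha ht x)

lemma integral_pdens_sub_eq (a t x r : ℝ) :
    (∫ y in r..a, pdens a t x y) - (1 + muFn a * r) * exp (muFn a * (x - r)) * growthSlope a t x =
      exp (muFn a * x) * firstMomentError (muFn a) a t x r a := by
  have hpdens : ∀ y, pdens a t x y =
      exp (muFn a * x) * (exp (-(muFn a * y)) * growthKernel a t x y) := fun y => by
    rw [pdens, growthKernel, exp_add, mul_sub, sub_eq_add_neg, exp_add]
    ring
  simp only [hpdens]
  rw [intervalIntegral.integral_const_mul, firstMomentError, mul_sub (muFn a),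
    sub_eq_add_neg (muFn a * x), exp_add]
  ring

lemma growthKernel_sub_growthSlope_mul (ha : 0 < a) (ht : 0 < t) (x y : ℝ) :
    growthKernel a t x y - growthSlope a t x * y = exp (π ^ 2 * t / (2 * a ^ 2)) / a *
      symmRemainder (fun z => thetaFn z (t / a ^ 2)) (x / a) (y / a) := by
  rw [growthKernel, growthSlope, pker_eq_thetaFn_sub ha ht, symmRemainder]
  field_simp
  ring

lemma abs_firstMomentError_le (ha : 0 < a) (ht : 0 < t) (hm : 1 / 2 ≤ m)
    (hma : 1 - m ^ 2 = π ^ 2 / a ^ 2) (hr : 0 ≤ r) (hrb : r ≤ b) (haL : a ≤ L * b)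
    (hslope : exp (π ^ 2 * t / (2 * a ^ 2)) *
      |deriv (fun z => thetaFn z (t / a ^ 2)) (x / a)| ≤ K)
    (hcubic : ∀ y ∈ Icc r b, exp (π ^ 2 * t / (2 * a ^ 2)) *
      |symmRemainder (fun z => thetaFn z (t / a ^ 2)) (x / a) (y / a)| ≤ K * (y / a) ^ 3) :
    |firstMomentError m a t x r b| ≤
      (176 + 1152 * L ^ 2) * K * momentWeight m r / a ^ 4 := by
  have hK : 0 ≤ K := (by positivity : (0 : ℝ) ≤ _).trans hslope
  have hA : |growthSlope a t x| ≤ 2 * K / a ^ 2 := by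
    rw [growthSlope, abs_mul, abs_neg, abs_of_pos (by positivity), div_mul_eq_mul_div, mul_assoc]
    gcongr
  have hP : ∀ y ∈ Icc r b, |growthKernel a t x y - growthSlope a t x * y| ≤ K / a ^ 4 * y ^ 3 := by
    intro y hy
    rw [growthKernel_sub_growthSlope_mul ha ht, abs_mul, abs_of_pos (by positivity),
      div_mul_eq_mul_div]
    calc exp (π ^ 2 * t / (2 * a ^ 2)) *
          |symmRemainder (fun z => thetaFn z (t / a ^ 2)) (x / a) (y / a)| / a
        ≤ K * (y / a) ^ 3 / a := div_le_div_of_nonneg_right (hcubic y hy) ha.le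
      _ = K / a ^ 4 * y ^ 3 := by field_simp
  calc |firstMomentError m a t x r b|
      ≤ 96 * (K / a ^ 4) * momentWeight m r +
          (40 + 576 * L ^ 2) * (2 * K) * momentWeight m r / a ^ 4 :=
        (abs_sub_le _ _ _).trans (add_le_add
          (abs_integral_exp_neg_mul_sub_le hm hr hrb (by positivity)
            (continuous_growthKernel ha ht x) hP)
          (abs_linear_moment_sub_le ha hm hma hr hrb haL hA))
    _ = (176 + 1152 * L ^ 2) * K * momentWeight m r / a ^ 4 := by ring

lemma abs_integral_exp_neg_mul_growthKernel_le (ha : 0 < a) (ht : 0 < t) (hm : 0 ≤ m)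
    (hb : 0 ≤ b) (hba : b ≤ a) (x : ℝ) :
    |∫ y in b..a, exp (-(m * y)) * growthKernel a t x y| ≤
      exp (π ^ 2 * t / (2 * a ^ 2)) * exp (-(m * b)) := by
  set E := exp (π ^ 2 * t / (2 * a ^ 2)) with hE
  have habs := (continuous_pker ha ht x).abs
  rw [← norm_eq_abs]
  calc ‖∫ y in b..a, exp (-(m * y)) * growthKernel a t x y‖
      ≤ ∫ y in b..a, E * exp (-(m * b)) * |pker a t x y| := by
        refine intervalIntegral.norm_integral_le_of_norm_le hba (ae_of_all _ fun y hy => ?_)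
          ((continuous_const.mul habs).intervalIntegrable _ _)
        rw [growthKernel, ← hE, norm_eq_abs, abs_mul, abs_mul, abs_of_pos (exp_pos _),
          abs_of_pos (exp_pos _), mul_left_comm, ← mul_assoc]
        gcongr
        exact hy.1.le
    _ ≤ E * exp (-(m * b)) * 1 := by
        rw [intervalIntegral.integral_const_mul]
        gcongr
        exact integral_abs_pker_le_one ha ht hb hba x
    _ = E * exp (-(m * b)) := mul_one _

lemma exp_neg_mul_add_le (ha : 0 < a) (hm : 1 / 2 ≤ m) (hr : 0 ≤ r) :
    exp (-(m * (r + a / 40))) ≤ 24 * 80 ^ 4 * momentWeight m r / a ^ 4 := by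
  have hpow : (a / 80) ^ 4 ≤ exp (a / 80) * 24 := by
    simpa [Nat.factorial] using
      (div_le_iff₀ (by positivity)).mp (pow_div_factorial_le_exp (a / 80) (by positivity) 4)
  have hdecay : exp (-(a / 80)) ≤ 24 * 80 ^ 4 / a ^ 4 := by
    rw [exp_neg, inv_le_comm₀ (exp_pos _) (by positivity), inv_div, div_le_iff₀ (by positivity)]
    linarith
  calc exp (-(m * (r + a / 40)))
      ≤ exp (-(m * r)) * exp (-(a / 80)) := by
        rw [← exp_add, exp_le_exp]
        nlinarith
    _ ≤ momentWeight m r * (24 * 80 ^ 4 / a ^ 4) :=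
        mul_le_mul (exp_neg_le_momentWeight (by linarith) hr) hdecay (exp_pos _).le
          (momentWeight_pos (by linarith) hr).le
    _ = 24 * 80 ^ 4 * momentWeight m r / a ^ 4 := by ring

lemma sin_pi_mul_div_nonneg (ha : 0 < a) (hx : x ∈ Icc 0 a) : 0 ≤ sin (π * x / a) :=
  sin_nonneg_of_nonneg_of_le_pi (div_nonneg (mul_nonneg pi_nonneg hx.1) ha.le)
    ((div_le_iff₀ ha).mpr (mul_le_mul_of_nonneg_left hx.2 pi_nonneg))

lemma exists_abs_firstMomentError_le_of_sq_le :
    ∃ K, 0 ≤ K ∧ ∀ {a t x r m : ℝ}, 0 < a → a ^ 2 ≤ t → x ∈ Icc 0 a → r ∈ Icc 0 a → 1 / 2 ≤ m →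
      1 - m ^ 2 = π ^ 2 / a ^ 2 →
      |firstMomentError m a t x r a| ≤ K * sin (π * x / a) * momentWeight m r / a ^ 4 := by
  obtain ⟨K, hK, hθ⟩ := exists_exp_mul_abs_thetaFn_le one_pos
  refine ⟨(176 + 1152 * 1 ^ 2) * K, by positivity, fun {a t x r m} ha hat hx hr hm hma => ?_⟩
  have hs : 1 ≤ t / a ^ 2 := (one_le_div (by positivity)).mpr hat
  have hsin : |sin (π * (x / a))| = sin (π * x / a) := by
    rw [← mul_div_assoc, abs_of_nonneg (sin_pi_mul_div_nonneg ha hx)]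
  obtain ⟨hslope, hcubic⟩ := hθ (t / a ^ 2) hs (x / a)
  rw [hsin, ← mul_div_assoc, div_div, mul_comm (a ^ 2)] at hslope hcubic
  rw [mul_assoc _ K]
  exact abs_firstMomentError_le ha ((sq_pos_of_pos ha).trans_le hat) hm hma hr.1 hr.2
    (one_mul a).ge hslope fun y hy => hcubic _ (div_nonneg (hr.1.trans hy.1) ha.le)

lemma exists_abs_firstMomentError_le_of_le_sq :
    ∃ K, 0 ≤ K ∧ ∀ {a t x r m : ℝ}, 0 < a → 0 < t → t ≤ a ^ 2 → x ≤ a → 0 ≤ r →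
      r + a / 20 ≤ x → 1 / 2 ≤ m → 1 - m ^ 2 = π ^ 2 / a ^ 2 →
      |firstMomentError m a t x r a| ≤ K * momentWeight m r / a ^ 4 := by
  obtain ⟨K, hK, hθ⟩ := exists_abs_thetaFn_le_of_mem_Icc (by norm_num : (0 : ℝ) < 1 / 40)
  refine ⟨exp (π ^ 2 / 2) * ((176 + 1152 * 40 ^ 2) * K + 24 * 80 ^ 4), by positivity,
    fun {a t x r m} ha ht hat hxa hr hrx hm hma => ?_⟩
  have hm₀ : 0 ≤ m := by linarith
  have hE : exp (π ^ 2 * t / (2 * a ^ 2)) ≤ exp (π ^ 2 / 2) := by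
    rw [exp_le_exp, div_le_div_iff₀ (by positivity) two_pos]
    nlinarith [mul_le_mul_of_nonneg_left hat (sq_nonneg π)]
  obtain ⟨hslope, hcubic⟩ := hθ (t / a ^ 2) (by positivity)
  -- For `y ≤ r + a / 40` every `x ± y` stays `a / 40` away from the singularities in `2 a ℤ`
  -- of `θ(· / a, t / a²)` as `t → 0`; larger `y` carry an exponentially small weight.
  have hnear : |firstMomentError m a t x r (r + a / 40)| ≤
      (176 + 1152 * 40 ^ 2) * (exp (π ^ 2 / 2) * K) * momentWeight m r / a ^ 4 := by
    have hxa' : x / a ≤ 1 := (div_le_one ha).mpr hxa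
    refine abs_firstMomentError_le ha ht hm hma hr (by linarith) (by linarith) ?_ fun y hy => ?_
    · gcongr
      exact hslope _ ⟨(le_div_iff₀ ha).mpr (by linarith), by linarith⟩
    · have hy₀ : 0 ≤ y := hr.trans hy.1
      have hyx : y / a + 1 / 40 ≤ x / a := by
        rw [div_add' _ _ _ ha.ne', div_le_div_iff_of_pos_right ha]
        linarith [hy.2]
      rw [mul_assoc]
      gcongr
      exact hcubic _ _ (by positivity) (by linarith) (by linarith)
  have htail : |∫ y in (r + a / 40)..a, exp (-(m * y)) * growthKernel a t x y| ≤
      exp (π ^ 2 / 2) * (24 * 80 ^ 4 * momentWeight m r / a ^ 4) :=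
    (abs_integral_exp_neg_mul_growthKernel_le ha ht hm₀ (by positivity) (by linarith) x).trans
      (mul_le_mul hE (exp_neg_mul_add_le ha hm hr) (exp_pos _).le (exp_pos _).le)
  have hsplit : firstMomentError m a t x r a = firstMomentError m a t x r (r + a / 40) +
      ∫ y in (r + a / 40)..a, exp (-(m * y)) * growthKernel a t x y := by
    have hcont : Continuous fun y => exp (-(m * y)) * growthKernel a t x y :=
      (by fun_prop : Continuous fun y => exp (-(m * y))).mul (continuous_growthKernel ha ht x)
    rw [firstMomentError, firstMomentError, sub_add_eq_add_sub,
      intervalIntegral.integral_add_adjacent_intervals (hcont.intervalIntegrable _ _)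
        (hcont.intervalIntegrable _ _)]
  rw [hsplit]
  refine (abs_add_le _ _).trans ((add_le_add hnear htail).trans (le_of_eq ?_))
  ring

lemma one_sub_muFn_sq (ha : π ≤ a) : 1 - muFn a ^ 2 = π ^ 2 / a ^ 2 := by
  have hratio : π ^ 2 / a ^ 2 ≤ 1 :=
    div_le_one_of_le₀ (pow_le_pow_left₀ pi_nonneg ha 2) (sq_nonneg a)
  rw [muFn, sq_sqrt (sub_nonneg.mpr hratio), sub_sub_cancel]

end FirstMoment

/-- Sharp first-moment formula for the expected number of particles in `[r,a]`
at time `t`, in terms of `θ'` (partial derivative of θ in its first variable). -/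
theorem stmt16 :
    ∃ C : ℝ, 0 < C ∧ ∀ a : ℝ, π ≤ a → (1/2 : ℝ) ≤ muFn a →
      ∀ t : ℝ, 0 < t → ∀ x ∈ Set.Icc (0:ℝ) a, ∀ r ∈ Set.Icc (0:ℝ) a,
      (t ≤ a^2 → r + a/20 ≤ x) →
      |(∫ y in r..a, pdens a t x y) -
          (1 + muFn a * r) * Real.exp (muFn a * (x - r)) *
            (-(2 * Real.exp (π^2 * t / (2 * a^2)) / a^2) *
              deriv (fun z => thetaFn z (t / a^2)) (x / a))| ≤
        C * (1 + muFn a * r) * Real.exp (muFn a * (x - r)) * (1 + r^2) *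
          max (Real.sin (π * x / a)) (if t ≤ a^2 then 1 else 0) / a^4 := by
  obtain ⟨K₁, hK₁, hlarge⟩ := exists_abs_firstMomentError_le_of_sq_le
  obtain ⟨K₂, hK₂, hsmall⟩ := exists_abs_firstMomentError_le_of_le_sq
  refine ⟨K₁ + K₂ + 1, by positivity, fun a ha hm t ht x hx r hr hrx => ?_⟩
  have ha₀ : 0 < a := pi_pos.trans_le ha
  have hma := one_sub_muFn_sq ha
  have hweight := momentWeight_pos (by linarith : 0 ≤ muFn a) hr.1
  rw [← growthSlope, integral_pdens_sub_eq, abs_mul, abs_of_pos (exp_pos _)]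
  set M := max (sin (π * x / a)) (if t ≤ a ^ 2 then 1 else 0)
  calc exp (muFn a * x) * |firstMomentError (muFn a) a t x r a|
      ≤ exp (muFn a * x) * ((K₁ + K₂ + 1) * M * momentWeight (muFn a) r / a ^ 4) := by
        gcongr
        rcases le_or_gt t (a ^ 2) with hta | hta
        · refine (hsmall ha₀ ht hta hx.2 hr.1 (hrx hta) hm hma).trans ?_
          have hM₁ : 1 ≤ M := le_max_of_le_right (by rw [if_pos hta])
          gcongr
          nlinarith
        · refine (hlarge ha₀ hta.le hx hr hm hma).trans ?_
          gcongr ?_ * _ / _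
          exact mul_le_mul (by linarith) (le_max_left _ _)
            (sin_pi_mul_div_nonneg ha₀ hx) (by positivity)
    _ = (K₁ + K₂ + 1) * (1 + muFn a * r) * exp (muFn a * (x - r)) * (1 + r ^ 2) * M / a ^ 4 := by
        rw [momentWeight, mul_sub, sub_eq_add_neg, exp_add]
        ring
end

section
/- There exists a universal constant C such that for every a ≥ π with μ = √(1 − π²/a²) ≥ 1/2, every t > 0, every r ∈ [0,a] and every x ∈ [r + a/20, a]: |∫_r^a 𝔭_t(x,y) dy − (2π(1+μr)·e^{μ(a−r)}/a³)·w_Z(x)·θ̄(t/a²)| ≤ C·(2π(1+μr)·e^{μ(a−r)}/a³)·((1 + r² + (a−x)²)/a)·w_Y(x). -/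
open Real MeasureTheory Set Filter

/-- `w_Z(x) = a·e^{μ(x−a)}·sin(πx/a)`. -/
noncomputable def wZ (a x : ℝ) : ℝ := a * Real.exp (muFn a * (x - a)) * Real.sin (π * x / a)

/-- `w_Y(x) = e^{μ(x−a)}`. -/
noncomputable def wY (a x : ℝ) : ℝ := Real.exp (muFn a * (x - a))

/-- `θ̄(t) = ∑_{n≥1} (−1)^{n+1}·n²·exp(−π²(n²−1)t/2)`. -/
noncomputable def thetaBar (t : ℝ) : ℝ :=
  ∑' n : ℕ, (-1 : ℝ)^n * ((n : ℝ) + 1)^2 *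
    Real.exp (-(π^2) * (((n : ℝ) + 1)^2 - 1) * t / 2)

/-!
Rescaled to the unit interval and divided by the ground-state decay, the killed kernel is a
reflected difference `Θ(1 − ξ + η) − Θ(1 − ξ − η)` of an alternating theta series `Θ`. Poisson
summation turns `Θ` into a sum of Gaussians centred at the odd integers, so at a fixed distance from
those points its derivatives are bounded uniformly in time: termwise when `s ≥ 1`, and by Cauchy's
estimate for the Gaussian sum when `s ≤ 1`. As `Θ` is even, its second derivative `π² θ̄` at `0`
governs the difference, with a cubic error.

Integrating against `e^{−μ(y−r)}`, the main term comes from `∫ y e^{−μ(y−r)} dy`, and `y` far from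
`r` contributes exponentially little. There the kernel has no useful pointwise bound, but it is
bounded in `L¹` because `Θ` is bounded below and has mean zero over a period.
-/

open HurwitzZeta

/-- The `n`-th Dirichlet frequency `π(n+1)` of the unit interval, with `n` counted from `0`. -/
noncomputable def modeFreq (n : ℕ) : ℝ := π * (n + 1)

/-- The decay factor `exp(−(π²(n+1)² − π²)s/2)` of the `n`-th Dirichlet mode of the unit interval
relative to the ground state. -/
noncomputable def modeDecay (s : ℝ) (n : ℕ) : ℝ :=
  Real.exp (-(π ^ 2) * (((n : ℝ) + 1) ^ 2 - 1) * s / 2)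

/-- The `n`-th term of the series `altTheta k s u`. The phase `kπ/2` rotates `cos` through its
derivatives. -/
noncomputable def altThetaTerm (k : ℤ) (s u : ℝ) (n : ℕ) : ℝ :=
  (-1) ^ (n + 1) * (modeDecay s n * modeFreq n ^ k) * Real.cos (modeFreq n * u + k * (π / 2))

/-- The `k`-th derivative in `u` of the alternating theta series
`∑_{n≥1} (−1)^n exp(−π²(n²−1)s/2) cos(πnu)`, from which the killed heat kernel is assembled by
reflection. The index `k` is an integer so that `k = −1` is an antiderivative. -/
noncomputable def altTheta (k : ℤ) (s u : ℝ) : ℝ := ∑' n, altThetaTerm k s u n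

lemma one_le_modeFreq (n : ℕ) : 1 ≤ modeFreq n :=
  one_le_mul_of_one_le_of_one_le (by linarith [Real.pi_gt_three])
    (le_add_of_nonneg_left n.cast_nonneg)

lemma modeFreq_pos (n : ℕ) : 0 < modeFreq n := one_pos.trans_le (one_le_modeFreq n)

lemma modeDecay_pos (s : ℝ) (n : ℕ) : 0 < modeDecay s n := Real.exp_pos _

lemma modeDecay_mul_zpow_nonneg (k : ℤ) (s : ℝ) (n : ℕ) : 0 ≤ modeDecay s n * modeFreq n ^ k :=
  mul_nonneg (modeDecay_pos s n).le (zpow_nonneg (modeFreq_pos n).le k)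

lemma modeDecay_antitone (n : ℕ) : Antitone (modeDecay · n) := fun s s' h => by
  have hn : 0 ≤ π ^ 2 * (((n : ℝ) + 1) ^ 2 - 1) :=
    mul_nonneg (by positivity) (by nlinarith [n.cast_nonneg (α := ℝ)])
  refine Real.exp_le_exp.mpr ?_
  linarith [mul_le_mul_of_nonneg_left h hn]

lemma modeDecay_le_geometric {s : ℝ} (hs : 0 ≤ s) (n : ℕ) :
    modeDecay s n ≤ Real.exp (π ^ 2 * s / 2) * Real.exp (-(π ^ 2 * s / 2) * (n + 1 : ℕ)) := by
  have hn : 0 ≤ π ^ 2 * s / 2 * (((n : ℝ) + 1) ^ 2 - 1 - n) :=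
    mul_nonneg (by positivity) (by nlinarith [n.cast_nonneg (α := ℝ)])
  rw [← Real.exp_add]
  refine Real.exp_le_exp.mpr ?_
  push_cast
  linarith

lemma summable_modeDecay_mul_zpow {s : ℝ} (hs : 0 < s) (k : ℤ) :
    Summable fun n => modeDecay s n * modeFreq n ^ k := by
  have hsum := ((summable_nat_add_iff 1).mpr (Real.summable_pow_mul_exp_neg_nat_mul k.toNat
    (by positivity : 0 < π ^ 2 * s / 2))).mul_left (π ^ k.toNat * Real.exp (π ^ 2 * s / 2))
  refine hsum.of_nonneg_of_le (modeDecay_mul_zpow_nonneg k s) fun n => ?_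
  have hfreq : modeFreq n ^ k ≤ modeFreq n ^ k.toNat := by
    rw [← zpow_natCast]
    exact zpow_le_zpow_right₀ (one_le_modeFreq n) k.self_le_toNat
  calc modeDecay s n * modeFreq n ^ k
      ≤ (Real.exp (π ^ 2 * s / 2) * Real.exp (-(π ^ 2 * s / 2) * (n + 1 : ℕ))) *
          modeFreq n ^ k.toNat :=
        mul_le_mul (modeDecay_le_geometric hs.le n) hfreq (zpow_nonneg (modeFreq_pos n).le k)
          (by positivity)
    _ = _ := by
        rw [modeFreq, mul_pow]
        push_cast
        ring

lemma norm_altThetaTerm_le (k : ℤ) (s u : ℝ) (n : ℕ) :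
    ‖altThetaTerm k s u n‖ ≤ modeDecay s n * modeFreq n ^ k := by
  rw [altThetaTerm, norm_mul, norm_mul, norm_pow, norm_neg, norm_one, one_pow, one_mul,
    Real.norm_of_nonneg (modeDecay_mul_zpow_nonneg k s n)]
  exact mul_le_of_le_one_right (modeDecay_mul_zpow_nonneg k s n) (Real.abs_cos_le_one _)

lemma summable_altThetaTerm {s : ℝ} (hs : 0 < s) (k : ℤ) (u : ℝ) :
    Summable (altThetaTerm k s u) :=
  (summable_modeDecay_mul_zpow hs k).of_norm_bounded (norm_altThetaTerm_le k s u)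

lemma hasDerivAt_altThetaTerm (k : ℤ) (s u : ℝ) (n : ℕ) :
    HasDerivAt (altThetaTerm k s · n) (altThetaTerm (k + 1) s u n) u := by
  have hphase : HasDerivAt (fun v => modeFreq n * v + k * (π / 2)) (modeFreq n) u := by
    simpa only [id_eq, mul_one] using ((hasDerivAt_id u).const_mul _).add_const (k * (π / 2))
  refine (hphase.cos.const_mul _).congr_deriv ?_
  rw [altThetaTerm, zpow_add_one₀ (modeFreq_pos n).ne',
    show modeFreq n * u + ((k + 1 : ℤ) : ℝ) * (π / 2) =
      modeFreq n * u + k * (π / 2) + π / 2 by push_cast; ring, Real.cos_add_pi_div_two]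
  ring

lemma hasDerivAt_altTheta {s : ℝ} (hs : 0 < s) (k : ℤ) (u : ℝ) :
    HasDerivAt (altTheta k s) (altTheta (k + 1) s u) u :=
  hasDerivAt_tsum (summable_modeDecay_mul_zpow hs (k + 1))
    (fun n v => hasDerivAt_altThetaTerm k s v n) (fun n v => norm_altThetaTerm_le (k + 1) s v n)
    (summable_altThetaTerm hs k 0) u

lemma continuous_altTheta {s : ℝ} (hs : 0 < s) (k : ℤ) : Continuous (altTheta k s) :=
  continuous_iff_continuousAt.mpr fun u => (hasDerivAt_altTheta hs k u).continuousAt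

lemma altTheta_periodic (k : ℤ) (s : ℝ) : Function.Periodic (altTheta k s) 2 := fun u =>
  tsum_congr fun n => by
    have hphase : modeFreq n * (u + 2) + k * (π / 2) =
        modeFreq n * u + k * (π / 2) + (n + 1 : ℕ) * (2 * π) := by
      rw [modeFreq]
      push_cast
      ring
    rw [altThetaTerm, altThetaTerm, hphase, Real.cos_add_nat_mul_two_pi]

lemma altTheta_one_zero (s : ℝ) : altTheta 1 s 0 = 0 := by simp [altTheta, altThetaTerm]

lemma altTheta_two_zero (s : ℝ) : altTheta 2 s 0 = π ^ 2 * thetaBar s := by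
  rw [altTheta, thetaBar, ← tsum_mul_left]
  refine tsum_congr fun n => ?_
  rw [altThetaTerm, show modeFreq n * 0 + ((2 : ℤ) : ℝ) * (π / 2) = π by push_cast; ring,
    Real.cos_pi, modeDecay, modeFreq, zpow_ofNat]
  ring

lemma integral_altTheta_period {s : ℝ} (hs : 0 < s) (u : ℝ) :
    ∫ v in (u - 1)..(u + 1), altTheta 0 s v = 0 := by
  have hprim (v : ℝ) : HasDerivAt (altTheta (-1) s) (altTheta 0 s v) v := by
    simpa only [neg_add_cancel] using hasDerivAt_altTheta hs (-1) v
  rw [intervalIntegral.integral_eq_sub_of_hasDerivAt (fun v _ => hprim v)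
    ((continuous_altTheta hs 0).intervalIntegrable _ _), show u + 1 = u - 1 + 2 by ring,
    altTheta_periodic, sub_self]

lemma norm_altTheta_le {s : ℝ} (hs : 1 ≤ s) (k : ℤ) (u : ℝ) :
    ‖altTheta k s u‖ ≤ ∑' n, modeDecay 1 n * modeFreq n ^ k :=
  tsum_of_norm_bounded (summable_modeDecay_mul_zpow one_pos k).hasSum fun n =>
    (norm_altThetaTerm_le k s u n).trans <|
      mul_le_mul_of_nonneg_right (modeDecay_antitone n hs) (zpow_nonneg (modeFreq_pos n).le k)

lemma hasSum_gaussian_altTheta {s : ℝ} (hs : 0 < s) (u : ℝ) :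
    HasSum (fun n : ℤ => √(2 / (π * s)) * Real.exp (-(u + (2 * n + 1)) ^ 2 / (2 * s)))
      (1 + 2 * Real.exp (-(π ^ 2 * s / 2)) * altTheta 0 s u) := by
  have hgauss := hasSum_int_evenKernel ((u + 1) / 2) (by positivity : 0 < 2 / (π * s))
  have hcos := hasSum_nat_cosKernel₀ ((u + 1) / 2) (by positivity : 0 < π * s / 2)
  have hmode (n : ℕ) : 2 * Real.cos (2 * π * ((u + 1) / 2) * (n + 1)) *
      Real.exp (-π * (n + 1) ^ 2 * (π * s / 2)) =
        2 * Real.exp (-(π ^ 2 * s / 2)) * altThetaTerm 0 s u n := by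
    have hexp : Real.exp (-π * (n + 1) ^ 2 * (π * s / 2)) =
        Real.exp (-(π ^ 2 * s / 2)) * modeDecay s n := by
      rw [modeDecay, ← Real.exp_add]
      ring_nf
    have hphase : 2 * π * ((u + 1) / 2) * (n + 1) = modeFreq n * u + (n + 1 : ℕ) * π := by
      rw [modeFreq]
      push_cast
      ring
    rw [hexp, hphase, Real.cos_add_nat_mul_pi, altThetaTerm, Int.cast_zero, zero_mul, add_zero,
      zpow_zero]
    ring
  have hkernel : cosKernel ((u + 1) / 2 : ℝ) (π * s / 2) =
      1 + 2 * Real.exp (-(π ^ 2 * s / 2)) * altTheta 0 s u := by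
    rw [← sub_eq_iff_eq_add', ← hcos.tsum_eq, altTheta, ← tsum_mul_left]
    exact tsum_congr hmode
  have hsqrt : √(2 / (π * s)) * (1 / (2 / (π * s)) ^ (1 / 2 : ℝ)) = 1 := by
    rw [← Real.sqrt_eq_rpow, mul_one_div_cancel (by positivity)]
  have hterm (n : ℤ) : -π * (n + (u + 1) / 2) ^ 2 * (2 / (π * s)) =
      -(u + (2 * n + 1)) ^ 2 / (2 * s) := by
    field_simp
    ring
  rw [evenKernel_functional_equation, one_div_div, hkernel] at hgauss
  simpa only [hterm, ← mul_assoc, hsqrt, one_mul] using hgauss.mul_left √(2 / (π * s))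

lemma neg_half_exp_le_altTheta {s : ℝ} (hs : 0 < s) (u : ℝ) :
    -(Real.exp (π ^ 2 * s / 2) / 2) ≤ altTheta 0 s u := by
  have hnonneg := (hasSum_gaussian_altTheta hs u).nonneg fun n => by positivity
  rw [Real.exp_neg] at hnonneg
  have hexp := Real.exp_pos (π ^ 2 * s / 2)
  field_simp at hnonneg
  linarith

/-- The neighbourhood of the segment `[-(1 - δ), 1 - δ]` on which every image Gaussian, centred at
an odd integer, decays. -/
def imageFreeStrip (δ : ℝ) : Set ℂ := {z | |z.re| < 1 - δ ∧ |z.im| < δ / 2}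

/-- The sum of the image Gaussians of `hasSum_gaussian_altTheta`, at a complex argument. -/
noncomputable def imageGaussianSum (s : ℝ) (z : ℂ) : ℂ :=
  ∑' n : ℤ, √(2 / (π * s)) * Complex.exp (-(z + (2 * n + 1)) ^ 2 / (2 * s))

lemma isOpen_imageFreeStrip (δ : ℝ) : IsOpen (imageFreeStrip δ) :=
  (isOpen_lt (continuous_abs.comp Complex.continuous_re) continuous_const).inter
    (isOpen_lt (continuous_abs.comp Complex.continuous_im) continuous_const)

lemma closedBall_subset_imageFreeStrip {δ u : ℝ} (hδ : 0 < δ) (hu : |u| ≤ 1 - δ) :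
    Metric.closedBall (u : ℂ) (δ / 8) ⊆ imageFreeStrip (δ / 2) := fun z hz => by
  rw [mem_closedBall_iff_norm] at hz
  have hre : |z.re - u| ≤ δ / 8 := by
    simpa only [Complex.sub_re, Complex.ofReal_re] using (Complex.abs_re_le_norm _).trans hz
  have him : |z.im| ≤ δ / 8 := by
    simpa only [Complex.sub_im, Complex.ofReal_im, sub_zero] using
      (Complex.abs_im_le_norm _).trans hz
  constructor <;> linarith [abs_sub_abs_le_abs_sub z.re u]

lemma le_re_sq_add_odd_of_mem_imageFreeStrip {δ : ℝ} (hδ : 0 < δ) {z : ℂ}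
    (hz : z ∈ imageFreeStrip δ) (n : ℤ) :
    δ ^ 2 * (2 * n + 1 : ℝ) ^ 2 / 2 ≤ ((z + (2 * n + 1)) ^ 2).re := by
  obtain ⟨hre, him⟩ := hz
  set k : ℝ := 2 * n + 1 with hk
  have hk1 : 1 ≤ |k| := by
    rw [hk]
    exact_mod_cast Int.one_le_abs (by lia : 2 * n + 1 ≠ 0)
  have hdist : δ * |k| ≤ |z.re + k| := by
    have htri : |k| - |z.re| ≤ |z.re + k| := by
      simpa only [abs_neg, sub_neg_eq_add, add_comm] using abs_sub_abs_le_abs_sub k (-z.re)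
    nlinarith [abs_nonneg z.re]
  have hre2 : δ ^ 2 * k ^ 2 ≤ (z.re + k) ^ 2 := by
    rw [← sq_abs k, ← sq_abs (z.re + k), ← mul_pow]
    gcongr
  have him2 : z.im ^ 2 ≤ (δ / 2) ^ 2 := by
    rw [← sq_abs z.im]
    gcongr
  have hk2 : 1 ≤ k ^ 2 := (one_le_sq_iff_one_le_abs k).mpr hk1
  have hexpand : ((z + (2 * n + 1)) ^ 2).re = (z.re + k) ^ 2 - z.im ^ 2 := by
    rw [show (2 * n + 1 : ℂ) = (k : ℂ) by rw [hk]; push_cast; rfl]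
    simp only [sq, Complex.mul_re, Complex.add_re, Complex.add_im, Complex.ofReal_re,
      Complex.ofReal_im]
    ring
  rw [hexpand]
  nlinarith [mul_le_mul_of_nonneg_left hk2 (sq_nonneg δ)]

lemma norm_gaussian_le {s d : ℝ} (hs : 0 < s) (hs1 : s ≤ 1) (hd : 0 < d) {w : ℂ}
    (hw : d ≤ (w ^ 2).re) : ‖√(2 / (π * s)) * Complex.exp (-w ^ 2 / (2 * s))‖ ≤ 2 / d := by
  have hprefactor : √(2 / (π * s)) ≤ 1 / s := by
    rw [Real.sqrt_le_left (by positivity), div_pow, div_le_div_iff₀ (by positivity)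
      (by positivity)]
    nlinarith [Real.pi_gt_three]
  have hre : (-w ^ 2 / (2 * s)).re = -((w ^ 2).re / (2 * s)) := by
    rw [show (2 * s : ℂ) = ((2 * s : ℝ) : ℂ) by push_cast; rfl, Complex.div_ofReal_re,
      Complex.neg_re, neg_div]
  have hexp : Real.exp (-((w ^ 2).re / (2 * s))) ≤ (d / (2 * s))⁻¹ :=
    calc Real.exp (-((w ^ 2).re / (2 * s)))
        ≤ Real.exp (-(d / (2 * s))) := by gcongr
      _ ≤ (d / (2 * s))⁻¹ := by
          rw [Real.exp_neg]
          gcongr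
          linarith [Real.add_one_le_exp (d / (2 * s))]
  rw [norm_mul, Complex.norm_exp, hre, Complex.norm_real, Real.norm_of_nonneg (Real.sqrt_nonneg _)]
  calc √(2 / (π * s)) * Real.exp (-((w ^ 2).re / (2 * s)))
      ≤ 1 / s * (d / (2 * s))⁻¹ := by gcongr
    _ = 2 / d := by field_simp

lemma norm_imageGaussian_le {s δ : ℝ} (hs : 0 < s) (hs1 : s ≤ 1) (hδ : 0 < δ) {z : ℂ}
    (hz : z ∈ imageFreeStrip δ) (n : ℤ) :
    ‖√(2 / (π * s)) * Complex.exp (-(z + (2 * n + 1)) ^ 2 / (2 * s))‖ ≤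
      4 / δ ^ 2 * (1 / ((2 * n + 1 : ℤ) : ℝ) ^ 2) := by
  have hodd : ((2 * n + 1 : ℤ) : ℝ) ≠ 0 := by exact_mod_cast (by lia : 2 * n + 1 ≠ 0)
  push_cast at hodd
  refine (norm_gaussian_le hs hs1 (by positivity)
    (le_re_sq_add_odd_of_mem_imageFreeStrip hδ hz n)).trans_eq ?_
  push_cast
  field_simp
  norm_num

lemma summable_inv_odd_sq : Summable fun n : ℤ => 1 / ((2 * n + 1 : ℤ) : ℝ) ^ 2 :=
  (Real.summable_one_div_int_pow.mpr one_lt_two).comp_injective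
    (i := fun n : ℤ => 2 * n + 1) fun m n h => by
      simp only [add_left_inj] at h
      lia

lemma norm_imageGaussianSum_le {s δ : ℝ} (hs : 0 < s) (hs1 : s ≤ 1) (hδ : 0 < δ) {z : ℂ}
    (hz : z ∈ imageFreeStrip δ) :
    ‖imageGaussianSum s z‖ ≤ 4 / δ ^ 2 * ∑' n : ℤ, 1 / ((2 * n + 1 : ℤ) : ℝ) ^ 2 :=
  tsum_of_norm_bounded (summable_inv_odd_sq.hasSum.mul_left _) (norm_imageGaussian_le hs hs1 hδ hz)

lemma differentiableOn_imageGaussianSum {s δ : ℝ} (hs : 0 < s) (hs1 : s ≤ 1) (hδ : 0 < δ) :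
    DifferentiableOn ℂ (imageGaussianSum s) (imageFreeStrip δ) :=
  Complex.differentiableOn_tsum_of_summable_norm (summable_inv_odd_sq.mul_left (4 / δ ^ 2))
    (fun n => by fun_prop) (isOpen_imageFreeStrip δ)
    fun n z hz => norm_imageGaussian_le hs hs1 hδ hz n

lemma imageGaussianSum_ofReal {s : ℝ} (hs : 0 < s) (u : ℝ) :
    imageGaussianSum s u = (1 + 2 * Real.exp (-(π ^ 2 * s / 2)) * altTheta 0 s u : ℝ) := by
  rw [← (hasSum_gaussian_altTheta hs u).tsum_eq, Complex.ofReal_tsum, imageGaussianSum]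
  push_cast
  rfl

lemma iteratedDeriv_ofReal_of_hasDerivAt {F : ℂ → ℂ} {U : Set ℂ} (hU : IsOpen U)
    (hF : DifferentiableOn ℂ F U) {φ : ℕ → ℝ → ℝ}
    (hφ : ∀ k u, HasDerivAt (φ k) (φ (k + 1) u) u) (hFφ : ∀ u : ℝ, F u = φ 0 u) (k : ℕ) :
    ∀ u : ℝ, (u : ℂ) ∈ U → iteratedDeriv k F u = φ k u := by
  induction k with
  | zero => exact fun u _ => by rw [iteratedDeriv_zero, hFφ]
  | succ k ih =>
    intro u hu
    have hdiff : DifferentiableAt ℂ (iteratedDeriv k F) u := by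
      rw [iteratedDeriv_eq_iterate]
      exact ((hF.analyticOnNhd hU).iterated_deriv k u hu).differentiableAt
    have hnear : (fun v : ℝ => iteratedDeriv k F v) =ᶠ[nhds u] fun v => (φ k v : ℂ) := by
      filter_upwards [(hU.preimage Complex.continuous_ofReal).mem_nhds hu] with v hv using ih v hv
    rw [iteratedDeriv_succ]
    exact (hdiff.hasDerivAt.comp_ofReal.congr_of_eventuallyEq hnear.symm).unique
      (hφ k u).ofReal_comp

lemma exists_abs_altTheta_le_of_le_one (k : ℕ) {δ : ℝ} (hδ : 0 < δ) :
    ∃ C, ∀ s, 0 < s → s ≤ 1 → ∀ u, |u| ≤ 1 - δ → |altTheta k s u| ≤ C := by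
  let M : ℝ := 4 / (δ / 2) ^ 2 * ∑' n : ℤ, 1 / ((2 * n + 1 : ℤ) : ℝ) ^ 2
  refine ⟨k.factorial * (Real.exp (π ^ 2 / 2) / 2 * (M + 1)) / (δ / 8) ^ k,
    fun s hs hs1 u hu => ?_⟩
  let F : ℂ → ℂ := fun z => (Real.exp (π ^ 2 * s / 2) / 2 : ℝ) * (imageGaussianSum s z - 1)
  have hball := closedBall_subset_imageFreeStrip hδ hu
  have hF : DifferentiableOn ℂ F (imageFreeStrip (δ / 2)) :=
    ((differentiableOn_imageGaussianSum hs hs1 (half_pos hδ)).sub_const 1).const_mul _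
  have hF_real (v : ℝ) : F v = altTheta (0 : ℕ) s v := by
    have hexp := Real.exp_ne_zero (π ^ 2 * s / 2)
    simp only [F, imageGaussianSum_ofReal hs, Real.exp_neg]
    norm_cast
    field_simp
    ring_nf
  have hderiv : iteratedDeriv k F u = altTheta k s u :=
    iteratedDeriv_ofReal_of_hasDerivAt (isOpen_imageFreeStrip _) hF
      (φ := fun j => altTheta j s)
      (fun j v => mod_cast hasDerivAt_altTheta hs j v) hF_real k u
      (hball (Metric.mem_closedBall_self (by positivity)))
  have hF_norm (z : ℂ) (hz : z ∈ Metric.sphere (u : ℂ) (δ / 8)) :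
      ‖F z‖ ≤ Real.exp (π ^ 2 / 2) / 2 * (M + 1) := by
    have hsum : ‖imageGaussianSum s z - 1‖ ≤ M + 1 :=
      (norm_sub_le _ _).trans <| add_le_add (norm_imageGaussianSum_le hs hs1 (half_pos hδ)
        (hball (Metric.sphere_subset_closedBall hz))) norm_one.le
    rw [norm_mul, Complex.norm_real, Real.norm_of_nonneg (by positivity)]
    have hs2 : π ^ 2 * s ≤ π ^ 2 := mul_le_of_le_one_right (sq_nonneg π) hs1
    gcongr
  have hcauchy := Complex.norm_iteratedDeriv_le_of_forall_mem_sphere_norm_le k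
    (by positivity : 0 < δ / 8) (hF.diffContOnCl_ball hball) hF_norm
  rwa [hderiv, Complex.norm_real, Real.norm_eq_abs] at hcauchy

lemma exists_abs_altTheta_le (k : ℕ) {δ : ℝ} (hδ : 0 < δ) :
    ∃ C, 0 < C ∧ ∀ s, 0 < s → ∀ u, |u| ≤ 1 - δ → |altTheta k s u| ≤ C := by
  obtain ⟨C, hC⟩ := exists_abs_altTheta_le_of_le_one k hδ
  refine ⟨max (max C (∑' n, modeDecay 1 n * modeFreq n ^ (k : ℤ))) 1, by positivity,
    fun s hs u hu => ?_⟩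
  rcases le_total s 1 with hs1 | hs1
  · exact (hC s hs hs1 u hu).trans ((le_max_left _ _).trans (le_max_left _ _))
  · exact (norm_altTheta_le hs1 k u).trans ((le_max_right _ _).trans (le_max_left _ _))

lemma exists_le_altTheta : ∃ c, ∀ s, 0 < s → ∀ u, c ≤ altTheta 0 s u := by
  refine ⟨min (-(Real.exp (π ^ 2 / 2) / 2)) (-∑' n, modeDecay 1 n * modeFreq n ^ (0 : ℤ)),
    fun s hs u => ?_⟩
  rcases le_total s 1 with hs1 | hs1
  · have hs2 : π ^ 2 * s ≤ π ^ 2 := mul_le_of_le_one_right (sq_nonneg π) hs1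
    refine (min_le_left _ _).trans (le_trans ?_ (neg_half_exp_le_altTheta hs u))
    gcongr
  · exact (min_le_right _ _).trans (abs_le.mp (norm_altTheta_le hs1 0 u)).1

lemma exists_abs_thetaBar_le : ∃ C, 0 < C ∧ ∀ s, 0 < s → |thetaBar s| ≤ C := by
  obtain ⟨C, hC0, hC⟩ := exists_abs_altTheta_le 2 one_pos
  refine ⟨C, hC0, fun s hs => ?_⟩
  have hbound := hC s hs 0 (by simp)
  rw [Nat.cast_two, altTheta_two_zero, abs_mul, abs_of_pos (by positivity)] at hbound
  have hpi : 1 ≤ π ^ 2 := one_le_pow₀ (by linarith [Real.pi_gt_three])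
  exact (le_mul_of_one_le_left (abs_nonneg _) hpi).trans hbound

lemma abs_sub_linear_le {f f₁ f₂ : ℝ → ℝ} {C R : ℝ} (hf : ∀ x, HasDerivAt f (f₁ x) x)
    (hf₁ : ∀ x, HasDerivAt f₁ (f₂ x) x) (hC : ∀ x, |x| ≤ R → |f₂ x| ≤ C) {w : ℝ}
    (hw : |w| ≤ R) : |f w - f 0 - w * f₁ 0| ≤ C * w ^ 2 := by
  have hzero : (0 : ℝ) ∈ Icc (-|w|) |w| := by simp
  have hw_mem : w ∈ Icc (-|w|) |w| := ⟨neg_abs_le w, le_abs_self w⟩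
  have hslope (x : ℝ) (hx : x ∈ Icc (-|w|) |w|) : ‖f₁ x - f₁ 0‖ ≤ C * |w| := by
    have hbound := (convex_Icc (-|w|) |w|).norm_image_sub_le_of_norm_hasDerivWithin_le
      (fun y _ => (hf₁ y).hasDerivWithinAt) (fun y hy => hC y ((abs_le.mpr hy).trans hw)) hzero hx
    rw [sub_zero, Real.norm_eq_abs x] at hbound
    exact hbound.trans (mul_le_mul_of_nonneg_left (abs_le.mpr hx)
      ((abs_nonneg _).trans (hC w hw)))
  have hbound := (convex_Icc (-|w|) |w|).norm_image_sub_le_of_norm_hasDerivWithin_le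
    (fun y _ => ((hf y).sub ((hasDerivAt_id y).mul_const (f₁ 0))).hasDerivWithinAt)
    (fun y hy => by simpa only [one_mul] using hslope y hy) hzero hw_mem
  simp only [Pi.sub_apply, id_eq, zero_mul, sub_zero, Real.norm_eq_abs, mul_assoc, ← sq,
    sq_abs] at hbound
  rwa [sub_right_comm]

lemma abs_reflected_sub_sub_le {f f₁ f₂ f₃ : ℝ → ℝ} {C R : ℝ}
    (hf : ∀ x, HasDerivAt f (f₁ x) x) (hf₁ : ∀ x, HasDerivAt f₁ (f₂ x) x)
    (hf₂ : ∀ x, HasDerivAt f₂ (f₃ x) x) (hC : ∀ x, |x| ≤ R → |f₃ x| ≤ C)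
    (hcrit : f₁ 0 = 0) {ζ η : ℝ} (hζ : 0 ≤ ζ) (hη : 0 ≤ η) (hR : ζ + η ≤ R) :
    |f (ζ + η) - f (ζ - η) - 2 * ζ * η * f₂ 0| ≤ 2 * C * (ζ + η) ^ 2 * η := by
  have hC0 : 0 ≤ C := (abs_nonneg _).trans (hC 0 (by simpa using (add_nonneg hζ hη).trans hR))
  have hlinear (w : ℝ) (hw : |w| ≤ ζ + η) : |f₁ w - w * f₂ 0| ≤ C * (ζ + η) ^ 2 := by
    have hbound := abs_sub_linear_le hf₁ hf₂ hC (hw.trans hR)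
    rw [hcrit, sub_zero, ← sq_abs w] at hbound
    exact hbound.trans (by gcongr)
  have hderiv (y : ℝ) : HasDerivAt (fun y => f (ζ + y) - f (ζ - y) - 2 * ζ * y * f₂ 0)
      ((f₁ (ζ + y) - (ζ + y) * f₂ 0) + (f₁ (ζ - y) - (ζ - y) * f₂ 0)) y := by
    have hright := (hf (ζ + y)).comp_const_add ζ y
    have hleft := (hf (ζ - y)).comp_const_sub ζ y
    refine ((hright.sub hleft).sub (((hasDerivAt_id y).const_mul (2 * ζ)).mul_const
      (f₂ 0))).congr_deriv ?_
    ring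
  have hslope (y : ℝ) (hy : y ∈ Icc 0 η) :
      ‖(f₁ (ζ + y) - (ζ + y) * f₂ 0) + (f₁ (ζ - y) - (ζ - y) * f₂ 0)‖ ≤
        2 * C * (ζ + η) ^ 2 := by
    obtain ⟨hy0, hyη⟩ := hy
    have hplus := hlinear (ζ + y) (abs_le.mpr ⟨by linarith, by linarith⟩)
    have hminus := hlinear (ζ - y) (abs_le.mpr ⟨by linarith, by linarith⟩)
    linarith [norm_add_le (f₁ (ζ + y) - (ζ + y) * f₂ 0) (f₁ (ζ - y) - (ζ - y) * f₂ 0),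
      Real.norm_eq_abs (f₁ (ζ + y) - (ζ + y) * f₂ 0),
      Real.norm_eq_abs (f₁ (ζ - y) - (ζ - y) * f₂ 0)]
  have hbound := (convex_Icc 0 η).norm_image_sub_le_of_norm_hasDerivWithin_le
    (fun y _ => (hderiv y).hasDerivWithinAt) hslope (left_mem_Icc.mpr hη) (right_mem_Icc.mpr hη)
  simpa only [add_zero, sub_zero, sub_self, mul_zero, zero_mul, Real.norm_eq_abs,
    abs_of_nonneg hη] using hbound

/-- The killed heat kernel of the unit interval, divided by the ground-state decay
`exp(−π²s/2)`. -/
noncomputable def unitDensity (s ξ η : ℝ) : ℝ := Real.exp (π ^ 2 * s / 2) * pker 1 s ξ η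

/-- The error in replacing `unitDensity s ξ` by its linearization `2πη sin(πξ) θ̄(s)` at the
killing boundary `η = 0`. -/
noncomputable def kernelRemainder (s ξ η : ℝ) : ℝ :=
  unitDensity s ξ η - 2 * π * η * Real.sin (π * ξ) * thetaBar s

lemma altThetaTerm_zero_reflect_sub (s ξ η : ℝ) (n : ℕ) :
    altThetaTerm 0 s (1 - ξ + η) n - altThetaTerm 0 s (1 - ξ - η) n =
      2 * modeDecay s n * Real.sin (modeFreq n * ξ) * Real.sin (modeFreq n * η) := by
  have hreflect : Real.sin (modeFreq n * (1 - ξ)) =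
      (-1) ^ (n + 1) * -Real.sin (modeFreq n * ξ) := by
    rw [show modeFreq n * (1 - ξ) = (n + 1 : ℕ) * π - modeFreq n * ξ by
      rw [modeFreq]; push_cast; ring, Real.sin_nat_mul_pi_sub]
    ring
  have hsign : ((-1 : ℝ) ^ (n + 1)) * (-1) ^ (n + 1) = 1 := by
    rw [← mul_pow, neg_one_mul, neg_neg, one_pow]
  simp only [altThetaTerm, zpow_zero, Int.cast_zero, zero_mul, add_zero, mul_one]
  rw [mul_add, mul_sub _ (1 - ξ), Real.cos_add, Real.cos_sub, hreflect]
  linear_combination (2 * modeDecay s n * Real.sin (modeFreq n * ξ) *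
    Real.sin (modeFreq n * η)) * hsign

lemma unitDensity_eq {s : ℝ} (hs : 0 < s) (ξ η : ℝ) :
    unitDensity s ξ η = altTheta 0 s (1 - ξ + η) - altTheta 0 s (1 - ξ - η) := by
  rw [altTheta, altTheta, ← (summable_altThetaTerm hs 0 _).tsum_sub (summable_altThetaTerm hs 0 _),
    unitDensity, pker, ← mul_assoc, ← tsum_mul_left]
  refine tsum_congr fun n => ?_
  have hdecay : modeDecay s n =
      Real.exp (π ^ 2 * s / 2) * Real.exp (-π ^ 2 * ((n : ℝ) + 1) ^ 2 * s / (2 * 1 ^ 2)) := by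
    rw [modeDecay, ← Real.exp_add]
    ring_nf
  rw [altThetaTerm_zero_reflect_sub, hdecay, modeFreq, div_one, div_one, div_one]
  ring

lemma continuous_unitDensity {s : ℝ} (hs : 0 < s) (ξ : ℝ) : Continuous (unitDensity s ξ) := by
  rw [funext (unitDensity_eq hs ξ)]
  have hcont := continuous_altTheta hs 0
  fun_prop

lemma continuous_kernelRemainder {s : ℝ} (hs : 0 < s) (ξ : ℝ) :
    Continuous (kernelRemainder s ξ) :=
  (continuous_unitDensity hs ξ).sub (by fun_prop)

lemma abs_pi_mul_one_sub_sub_sin_le {ξ : ℝ} (hξ0 : 0 ≤ ξ) (hξ1 : ξ ≤ 1) :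
    |π * (1 - ξ) - Real.sin (π * ξ)| ≤ π ^ 3 * (1 - ξ) ^ 2 / 6 := by
  have hζ : 0 ≤ 1 - ξ := sub_nonneg.mpr hξ1
  have hcubic := Real.abs_sub_sin_le (π * (1 - ξ))
  rw [abs_of_nonneg (mul_nonneg Real.pi_nonneg hζ), mul_one_sub, Real.sin_pi_sub,
    ← mul_one_sub, mul_pow] at hcubic
  refine hcubic.trans ?_
  gcongr ?_ * ?_ / _
  exact pow_le_pow_of_le_one hζ (by linarith) (by norm_num)

lemma exists_abs_kernelRemainder_le {δ : ℝ} (hδ : 0 < δ) :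
    ∃ C, 0 < C ∧ ∀ s, 0 < s → ∀ ξ ≤ 1, ∀ η, 0 ≤ η → η ≤ ξ - δ →
      |kernelRemainder s ξ η| ≤ C * (η * (η ^ 2 + (1 - ξ) ^ 2)) := by
  obtain ⟨C₃, hC₃, hthird⟩ := exists_abs_altTheta_le 3 hδ
  obtain ⟨Cθ, hCθ, hthetaBar⟩ := exists_abs_thetaBar_le
  refine ⟨4 * C₃ + π ^ 4 * Cθ, by positivity, fun s hs ξ hξ η hη hηξ => ?_⟩
  have hζ : 0 ≤ 1 - ξ := sub_nonneg.mpr hξ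
  have htaylor := abs_reflected_sub_sub_le (hasDerivAt_altTheta hs 0) (hasDerivAt_altTheta hs 1)
    (hasDerivAt_altTheta hs 2) (hthird s hs) (altTheta_one_zero s) hζ hη
    (by linarith : 1 - ξ + η ≤ 1 - δ)
  have hsin := abs_pi_mul_one_sub_sub_sin_le (by linarith : 0 ≤ ξ) hξ
  have hsplit : kernelRemainder s ξ η =
      (altTheta 0 s (1 - ξ + η) - altTheta 0 s (1 - ξ - η) - 2 * (1 - ξ) * η * altTheta 2 s 0) +
        2 * π * η * (π * (1 - ξ) - Real.sin (π * ξ)) * thetaBar s := by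
    rw [kernelRemainder, unitDensity_eq hs, altTheta_two_zero]
    ring
  have hsin_term : |2 * π * η * (π * (1 - ξ) - Real.sin (π * ξ)) * thetaBar s| ≤
      2 * π * η * (π ^ 3 * (1 - ξ) ^ 2 / 6) * Cθ := by
    rw [abs_mul, abs_mul, abs_of_nonneg (mul_nonneg two_pi_pos.le hη)]
    gcongr
    exact hthetaBar s hs
  calc |kernelRemainder s ξ η|
      ≤ 2 * C₃ * (1 - ξ + η) ^ 2 * η + 2 * π * η * (π ^ 3 * (1 - ξ) ^ 2 / 6) * Cθ := by
        rw [hsplit]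
        exact (abs_add_le _ _).trans (add_le_add htaylor hsin_term)
    _ ≤ 2 * C₃ * (2 * (η ^ 2 + (1 - ξ) ^ 2)) * η +
          π ^ 4 * η * (η ^ 2 + (1 - ξ) ^ 2) * Cθ := by
        have hsquare : (1 - ξ + η) ^ 2 ≤ 2 * (η ^ 2 + (1 - ξ) ^ 2) := by
          linarith [add_sq_le (a := 1 - ξ) (b := η)]
        have hcoeff : 2 * π * η * (π ^ 3 * (1 - ξ) ^ 2 / 6) ≤
            π ^ 4 * η * (η ^ 2 + (1 - ξ) ^ 2) := by
          have hη3 : 0 ≤ π ^ 4 * η * η ^ 2 := by positivity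
          have hηζ : 0 ≤ π ^ 4 * η * (1 - ξ) ^ 2 := by positivity
          linarith
        gcongr
    _ = (4 * C₃ + π ^ 4 * Cθ) * (η * (η ^ 2 + (1 - ξ) ^ 2)) := by ring

lemma integral_abs_unitDensity_le {s c : ℝ} (hs : 0 < s) (hc : ∀ u, c ≤ altTheta 0 s u) (ξ : ℝ) :
    ∫ η in (0 : ℝ)..1, |unitDensity s ξ η| ≤ -(2 * c) := by
  have hcont := continuous_altTheta hs 0
  have hpointwise (η : ℝ) : |unitDensity s ξ η| ≤
      altTheta 0 s (1 - ξ + η) + altTheta 0 s (1 - ξ - η) - 2 * c := by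
    rw [unitDensity_eq hs, abs_le]
    constructor <;> linarith [hc (1 - ξ + η), hc (1 - ξ - η)]
  have hperiod : (∫ η in (0 : ℝ)..1, altTheta 0 s (1 - ξ + η)) +
      ∫ η in (0 : ℝ)..1, altTheta 0 s (1 - ξ - η) = 0 := by
    rw [intervalIntegral.integral_comp_add_left (altTheta 0 s),
      intervalIntegral.integral_comp_sub_left (altTheta 0 s), add_zero, sub_zero, add_comm,
      intervalIntegral.integral_add_adjacent_intervals (hcont.intervalIntegrable _ _)
        (hcont.intervalIntegrable _ _), integral_altTheta_period hs]
  calc ∫ η in (0 : ℝ)..1, |unitDensity s ξ η|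
      ≤ ∫ η in (0 : ℝ)..1, (altTheta 0 s (1 - ξ + η) + altTheta 0 s (1 - ξ - η) - 2 * c) :=
        intervalIntegral.integral_mono zero_le_one
          ((continuous_unitDensity hs ξ).abs.intervalIntegrable _ _)
          (Continuous.intervalIntegrable (by fun_prop) _ _) hpointwise
    _ = -(2 * c) := by
        rw [intervalIntegral.integral_sub (Continuous.intervalIntegrable (by fun_prop) _ _)
          intervalIntegrable_const,
          intervalIntegral.integral_add (Continuous.intervalIntegrable (by fun_prop) _ _)
          (Continuous.intervalIntegrable (by fun_prop) _ _), hperiod,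
          intervalIntegral.integral_const]
        simp

lemma exists_integral_abs_kernelRemainder_le :
    ∃ C, 0 < C ∧ ∀ s, 0 < s → ∀ ξ, ∫ η in (0 : ℝ)..1, |kernelRemainder s ξ η| ≤ C := by
  obtain ⟨c, hc⟩ := exists_le_altTheta
  obtain ⟨Cθ, hCθ, htheta⟩ := exists_abs_thetaBar_le
  refine ⟨max (-(2 * c)) 0 + 2 * π * Cθ, by positivity, fun s hs ξ => ?_⟩
  have hpointwise (η : ℝ) (hη : η ∈ Icc (0 : ℝ) 1) :
      |kernelRemainder s ξ η| ≤ |unitDensity s ξ η| + 2 * π * Cθ := by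
    have hlinear : |2 * π * η * Real.sin (π * ξ) * thetaBar s| ≤ 2 * π * 1 * 1 * Cθ := by
      rw [abs_mul, abs_mul, abs_of_nonneg (mul_nonneg two_pi_pos.le hη.1)]
      gcongr
      · exact hη.2
      · exact Real.abs_sin_le_one _
      · exact htheta s hs
    rw [mul_one, mul_one] at hlinear
    exact (abs_sub _ _).trans (by gcongr)
  have hint := (continuous_unitDensity hs ξ).abs.intervalIntegrable (μ := volume) 0 1
  calc ∫ η in (0 : ℝ)..1, |kernelRemainder s ξ η|
      ≤ ∫ η in (0 : ℝ)..1, (|unitDensity s ξ η| + 2 * π * Cθ) :=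
        intervalIntegral.integral_mono_on zero_le_one
          ((continuous_kernelRemainder hs ξ).abs.intervalIntegrable _ _)
          (hint.add intervalIntegrable_const) hpointwise
    _ = (∫ η in (0 : ℝ)..1, |unitDensity s ξ η|) + 2 * π * Cθ := by
        rw [intervalIntegral.integral_add hint intervalIntegrable_const]
        simp
    _ ≤ max (-(2 * c)) 0 + 2 * π * Cθ := by
        gcongr
        exact (integral_abs_unitDensity_le hs (hc s hs) ξ).trans (le_max_left _ _)

lemma pdens_eq (a t x y : ℝ) :
    pdens a t x y =
      a⁻¹ * Real.exp (muFn a * (x - y)) * unitDensity (t / a ^ 2) (x / a) (y / a) := by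
  have hker : pker a t x y = a⁻¹ * pker 1 (t / a ^ 2) (x / a) (y / a) := by
    rw [pker, pker, ← mul_assoc]
    congr 1
    · ring
    · exact tsum_congr fun n => by ring_nf
  rw [pdens, unitDensity, hker, Real.exp_add,
    show π ^ 2 * t / (2 * a ^ 2) = π ^ 2 * (t / a ^ 2) / 2 by ring]
  ring

lemma hasDerivAt_exp_neg_mul_sub (c r y : ℝ) :
    HasDerivAt (fun y => Real.exp (-c * (y - r))) (Real.exp (-c * (y - r)) * -c) y := by
  simpa only [mul_one] using (((hasDerivAt_id' y).sub_const r).const_mul (-c)).exp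

lemma integral_exp_neg_mul_sub_le {c : ℝ} (hc : 0 < c) (r b : ℝ) :
    ∫ y in r..b, Real.exp (-c * (y - r)) ≤ 1 / c := by
  have hprim (y : ℝ) : HasDerivAt (fun y => -Real.exp (-c * (y - r)) / c)
      (Real.exp (-c * (y - r))) y := by
    refine ((hasDerivAt_exp_neg_mul_sub c r y).neg.div_const c).congr_deriv ?_
    field_simp
  rw [intervalIntegral.integral_eq_sub_of_hasDerivAt (fun y _ => hprim y)
    (Continuous.intervalIntegrable (by fun_prop) _ _), sub_self, mul_zero, Real.exp_zero, neg_div,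
    neg_div, sub_neg_eq_add, neg_add_le_iff_le_add]
  exact le_add_of_nonneg_left (by positivity)

lemma integral_exp_neg_mul_sub_mul_self {c : ℝ} (hc : c ≠ 0) (r b : ℝ) :
    ∫ y in r..b, Real.exp (-c * (y - r)) * y =
      (1 + c * r) / c ^ 2 - (1 + c * b) / c ^ 2 * Real.exp (-c * (b - r)) := by
  have hprim (y : ℝ) : HasDerivAt (fun y => -((1 + c * y) / c ^ 2 * Real.exp (-c * (y - r))))
      (Real.exp (-c * (y - r)) * y) y := by
    have hpoly : HasDerivAt (fun y => (1 + c * y) / c ^ 2) (c / c ^ 2) y := by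
      simpa only [mul_one] using
        (((hasDerivAt_id' y).const_mul c).const_add 1).div_const (c ^ 2)
    refine (hpoly.mul (hasDerivAt_exp_neg_mul_sub c r y)).neg.congr_deriv ?_
    field_simp
    ring
  rw [intervalIntegral.integral_eq_sub_of_hasDerivAt (fun y _ => hprim y)
    (Continuous.intervalIntegrable (by fun_prop) _ _), sub_self, mul_zero, Real.exp_zero]
  ring

lemma exp_neg_mul_le_factorial_div_pow (k : ℕ) {c μ v w : ℝ} (hc : 0 < c) (hcμ : c ≤ μ)
    (hv : 0 < v) (hvw : v ≤ w) : Real.exp (-μ * w) ≤ k.factorial / (c * v) ^ k := by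
  have hμ : 0 ≤ μ := hc.le.trans hcμ
  calc Real.exp (-μ * w) ≤ Real.exp (-(c * v)) := by
        rw [neg_mul]
        gcongr
    _ = (Real.exp (c * v))⁻¹ := Real.exp_neg _
    _ ≤ ((c * v) ^ k / k.factorial)⁻¹ :=
        inv_anti₀ (by positivity) (Real.pow_div_factorial_le_exp _ (by positivity) k)
    _ = k.factorial / (c * v) ^ k := inv_div _ _

lemma one_add_pow_three_le {c : ℝ} (hc : 0 < c) {v : ℝ} (hv : 0 ≤ v) :
    (1 + v) ^ 3 ≤ 48 / c ^ 3 * Real.exp (c / 2) * Real.exp (c * v / 2) := by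
  have hcube := Real.pow_div_factorial_le_exp (c * (1 + v) / 2) (by positivity) 3
  rw [show c * (1 + v) / 2 = c / 2 + c * v / 2 by ring, Real.exp_add] at hcube
  calc (1 + v) ^ 3 = 48 / c ^ 3 * ((c / 2 + c * v / 2) ^ 3 / Nat.factorial 3) := by
        norm_num [Nat.factorial]
        field_simp
        ring
    _ ≤ 48 / c ^ 3 * (Real.exp (c / 2) * Real.exp (c * v / 2)) := by gcongr
    _ = _ := (mul_assoc _ _ _).symm

lemma abs_integral_exp_mul_le_of_cubic_growth {c μ r b A : ℝ} {f : ℝ → ℝ} (hc : 0 < c)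
    (hcμ : c ≤ μ) (hrb : r ≤ b) (hA : 0 ≤ A) (hf : ∀ y ∈ Icc r b, |f y| ≤ A * (1 + (y - r)) ^ 3) :
    |∫ y in r..b, Real.exp (-μ * (y - r)) * f y| ≤ 96 / c ^ 4 * Real.exp (c / 2) * A := by
  set K := 48 / c ^ 3 * Real.exp (c / 2) with hK
  have hpointwise (y : ℝ) (hy : y ∈ Ioc r b) :
      ‖Real.exp (-μ * (y - r)) * f y‖ ≤ A * K * Real.exp (-(c / 2) * (y - r)) := by
    have hv : 0 ≤ y - r := sub_nonneg.mpr hy.1.le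
    have hdecay : Real.exp (-μ * (y - r)) ≤ Real.exp (-c * (y - r)) := by gcongr
    rw [norm_mul, Real.norm_of_nonneg (Real.exp_pos _).le]
    calc Real.exp (-μ * (y - r)) * ‖f y‖
        ≤ Real.exp (-c * (y - r)) * (A * (K * Real.exp (c * (y - r) / 2))) :=
          mul_le_mul hdecay ((hf y (Ioc_subset_Icc_self hy)).trans
            (mul_le_mul_of_nonneg_left (one_add_pow_three_le hc hv) hA))
            (abs_nonneg _) (Real.exp_pos _).le
      _ = A * K * (Real.exp (-c * (y - r)) * Real.exp (c * (y - r) / 2)) := by ring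
      _ = A * K * Real.exp (-(c / 2) * (y - r)) := by
          rw [← Real.exp_add]
          ring_nf
  calc |∫ y in r..b, Real.exp (-μ * (y - r)) * f y|
      ≤ ∫ y in r..b, A * K * Real.exp (-(c / 2) * (y - r)) :=
        intervalIntegral.norm_integral_le_of_norm_le hrb (ae_of_all _ hpointwise)
          (Continuous.intervalIntegrable (by fun_prop) _ _)
    _ ≤ A * K * (1 / (c / 2)) := by
        rw [intervalIntegral.integral_const_mul]
        gcongr
        exact integral_exp_neg_mul_sub_le (half_pos hc) r b
    _ = 96 / c ^ 4 * Real.exp (c / 2) * A := by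
        rw [hK]
        field_simp
        ring

lemma abs_integral_exp_mul_tail_le {μ r b d : ℝ} {f : ℝ → ℝ} (hf : Continuous f) (hμ : 0 ≤ μ)
    (hbd : b ≤ d) : |∫ y in b..d, Real.exp (-μ * (y - r)) * f y| ≤
      Real.exp (-μ * (b - r)) * ∫ y in b..d, |f y| := by
  have hpointwise (y : ℝ) (hy : y ∈ Ioc b d) :
      ‖Real.exp (-μ * (y - r)) * f y‖ ≤ Real.exp (-μ * (b - r)) * |f y| := by
    rw [norm_mul, Real.norm_of_nonneg (Real.exp_pos _).le, Real.norm_eq_abs, neg_mul, neg_mul]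
    have hby : b ≤ y := hy.1.le
    gcongr
  rw [← intervalIntegral.integral_const_mul]
  exact intervalIntegral.norm_integral_le_of_norm_le hbd (ae_of_all _ hpointwise)
    (Continuous.intervalIntegrable (by fun_prop) _ _)

lemma exists_abs_kernelRemainder_div_le {ε : ℝ} (hε : 0 < ε) :
    ∃ C, 0 < C ∧ ∀ s, 0 < s → ∀ a, 0 < a → ∀ r, 0 ≤ r → ∀ x ≤ a, ∀ y, r ≤ y → y + ε * a ≤ x →
      |kernelRemainder s (x / a) (y / a)| ≤
        C * ((1 + r) * (1 + r ^ 2 + (a - x) ^ 2) / a ^ 3) * (1 + (y - r)) ^ 3 := by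
  obtain ⟨C, hC, hbound⟩ := exists_abs_kernelRemainder_le hε
  refine ⟨C, hC, fun s hs a ha r hr x hxa y hry hyx => ?_⟩
  have hy : 0 ≤ y := hr.trans hry
  have hgap : y / a ≤ x / a - ε := by
    rw [le_sub_iff_add_le, div_add' _ _ _ ha.ne']
    gcongr
  have hfactor : y ≤ (1 + r) * (1 + (y - r)) := by nlinarith
  have hsquare : y ^ 2 ≤ (1 + r ^ 2) * (1 + (y - r)) ^ 2 := by
    have hv : 0 ≤ y - r := sub_nonneg.mpr hry
    nlinarith [sq_nonneg (1 - r * (y - r)), mul_nonneg hr hv, sq_nonneg (r - (y - r)),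
      mul_nonneg (sq_nonneg r) hv]
  have hone : (a - x) ^ 2 ≤ (a - x) ^ 2 * (1 + (y - r)) ^ 2 :=
    le_mul_of_one_le_right (sq_nonneg _) (one_le_pow₀ (by linarith))
  calc |kernelRemainder s (x / a) (y / a)|
      ≤ C * (y / a * ((y / a) ^ 2 + (1 - x / a) ^ 2)) :=
        hbound s hs _ ((div_le_one ha).mpr hxa) _ (by positivity) hgap
    _ = C * (y * (y ^ 2 + (a - x) ^ 2) / a ^ 3) := by field_simp
    _ ≤ C * ((1 + r) * (1 + (y - r)) *
          ((1 + r ^ 2) * (1 + (y - r)) ^ 2 + (a - x) ^ 2 * (1 + (y - r)) ^ 2) / a ^ 3) := by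
        gcongr
    _ = _ := by ring

lemma exists_integral_abs_kernelRemainder_div_le :
    ∃ C, 0 < C ∧ ∀ s, 0 < s → ∀ a, 0 < a → ∀ ξ, ∀ b ∈ Icc 0 a,
      ∫ y in b..a, |kernelRemainder s ξ (y / a)| ≤ C * a := by
  obtain ⟨C, hC, hbound⟩ := exists_integral_abs_kernelRemainder_le
  refine ⟨C, hC, fun s hs a ha ξ b hb => ?_⟩
  have hcont : Continuous fun y => |kernelRemainder s ξ (y / a)| :=
    ((continuous_kernelRemainder hs ξ).comp (continuous_id.div_const a)).abs
  calc ∫ y in b..a, |kernelRemainder s ξ (y / a)|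
      ≤ ∫ y in (0 : ℝ)..a, |kernelRemainder s ξ (y / a)| :=
        intervalIntegral.integral_mono_interval hb.1 hb.2 le_rfl
          (ae_of_all _ fun y => abs_nonneg _) (hcont.intervalIntegrable _ _)
    _ = a * ∫ η in (0 : ℝ)..1, |kernelRemainder s ξ η| := by
        rw [intervalIntegral.integral_comp_div (fun η => |kernelRemainder s ξ η|) ha.ne',
          zero_div, div_self ha.ne', smul_eq_mul]
    _ ≤ C * a := by
        rw [mul_comm]
        gcongr
        exact hbound s hs ξ

lemma exists_abs_integral_exp_mul_kernelRemainder_tail_le {c δ : ℝ} (hc : 0 < c) (hδ : 0 < δ) :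
    ∃ C, 0 < C ∧ ∀ s, 0 < s → ∀ a, 0 < a → ∀ ξ, ∀ μ, c ≤ μ → ∀ r, 0 ≤ r → r + δ * a ≤ a →
      |∫ y in (r + δ * a)..a, Real.exp (-μ * (y - r)) * kernelRemainder s ξ (y / a)| ≤
        C * (1 / a ^ 3) := by
  obtain ⟨C, hC, htail⟩ := exists_integral_abs_kernelRemainder_div_le
  refine ⟨24 / (c * δ) ^ 4 * C, by positivity, fun s hs a ha ξ μ hμ r hr hra => ?_⟩
  have hcont : Continuous fun y => kernelRemainder s ξ (y / a) :=
    (continuous_kernelRemainder hs ξ).comp (continuous_id.div_const a)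
  have hdecay : Real.exp (-μ * (r + δ * a - r)) ≤ 24 / (c * (δ * a)) ^ 4 :=
    exp_neg_mul_le_factorial_div_pow 4 hc hμ (by positivity) (add_sub_cancel_left _ _).ge
  calc |∫ y in (r + δ * a)..a, Real.exp (-μ * (y - r)) * kernelRemainder s ξ (y / a)|
      ≤ Real.exp (-μ * (r + δ * a - r)) * ∫ y in (r + δ * a)..a, |kernelRemainder s ξ (y / a)| :=
        abs_integral_exp_mul_tail_le hcont (hc.le.trans hμ) hra
    _ ≤ 24 / (c * (δ * a)) ^ 4 * (C * a) :=
        mul_le_mul hdecay (htail s hs a ha ξ _ ⟨by positivity, hra⟩)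
          (intervalIntegral.integral_nonneg hra fun _ _ => abs_nonneg _) (by positivity)
    _ = 24 / (c * δ) ^ 4 * C * (1 / a ^ 3) := by field_simp

lemma exists_abs_integral_exp_mul_kernelRemainder_le {ε c : ℝ} (hε : 0 < ε) (hc : 0 < c) :
    ∃ C, 0 < C ∧ ∀ s, 0 < s → ∀ a, 0 < a → ∀ μ, c ≤ μ → ∀ r, 0 ≤ r → ∀ x ∈ Icc (r + ε * a) a,
      |∫ y in r..a, Real.exp (-μ * (y - r)) * kernelRemainder s (x / a) (y / a)| ≤
        C * ((1 + r) * (1 + r ^ 2 + (a - x) ^ 2) / a ^ 3) := by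
  obtain ⟨C₁, hC₁, hnear⟩ := exists_abs_kernelRemainder_div_le (half_pos hε)
  obtain ⟨C₂, hC₂, htail⟩ := exists_abs_integral_exp_mul_kernelRemainder_tail_le hc (half_pos hε)
  refine ⟨96 / c ^ 4 * Real.exp (c / 2) * C₁ + C₂, by positivity,
    fun s hs a ha μ hμ r hr x ⟨hxr, hxa⟩ => ?_⟩
  set b := r + ε / 2 * a with hb
  set G := (1 + r) * (1 + r ^ 2 + (a - x) ^ 2) / a ^ 3
  have hεa : 0 < ε * a := mul_pos hε ha
  have hnear_le : |∫ y in r..b, Real.exp (-μ * (y - r)) * kernelRemainder s (x / a) (y / a)| ≤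
      96 / c ^ 4 * Real.exp (c / 2) * (C₁ * G) :=
    abs_integral_exp_mul_le_of_cubic_growth hc hμ (by linarith) (by positivity)
      fun y hy => hnear s hs a ha r hr x hxa y hy.1 (by linarith [hy.2])
  have htail_le : |∫ y in b..a, Real.exp (-μ * (y - r)) * kernelRemainder s (x / a) (y / a)| ≤
      C₂ * G := by
    refine (htail s hs a ha (x / a) μ hμ r hr (by linarith)).trans ?_
    have hsq : 1 ≤ 1 + r ^ 2 + (a - x) ^ 2 := by linarith [sq_nonneg r, sq_nonneg (a - x)]
    exact mul_le_mul_of_nonneg_left (div_le_div_of_nonneg_right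
      (one_le_mul_of_one_le_of_one_le (le_add_of_nonneg_right hr) hsq) (by positivity)) hC₂.le
  have hcont : Continuous fun y => kernelRemainder s (x / a) (y / a) :=
    (continuous_kernelRemainder hs (x / a)).comp (continuous_id.div_const a)
  have hint (u v : ℝ) : IntervalIntegrable
      (fun y => Real.exp (-μ * (y - r)) * kernelRemainder s (x / a) (y / a)) volume u v :=
    Continuous.intervalIntegrable (by fun_prop) u v
  rw [← intervalIntegral.integral_add_adjacent_intervals (hint r b) (hint b a)]
  linarith [abs_add_le (∫ y in r..b, Real.exp (-μ * (y - r)) * kernelRemainder s (x / a) (y / a))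
    (∫ y in b..a, Real.exp (-μ * (y - r)) * kernelRemainder s (x / a) (y / a))]

lemma sq_muFn {a : ℝ} (ha : 0 < muFn a) : muFn a ^ 2 = 1 - π ^ 2 / a ^ 2 :=
  Real.sq_sqrt (Real.sqrt_pos.mp ha).le

lemma muFn_le_one (a : ℝ) : muFn a ≤ 1 :=
  (Real.sqrt_le_sqrt (sub_le_self _ (by positivity))).trans_eq Real.sqrt_one

lemma one_add_mul_mul_exp_le {ε c μ a r : ℝ} (hε : 0 < ε) (hc : 0 < c) (hcμ : c ≤ μ)
    (hμ : μ ≤ 1) (ha : 0 < a) (hra : r + ε * a ≤ a) :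
    (1 + μ * a) * Real.exp (-μ * (a - r)) ≤
      (2 / (c * ε) ^ 2 + 6 / (c * ε) ^ 3) * (1 / a ^ 2) := by
  have hdecay (k : ℕ) : Real.exp (-μ * (a - r)) ≤ k.factorial / (c * (ε * a)) ^ k :=
    exp_neg_mul_le_factorial_div_pow k hc hcμ (by positivity) (le_sub_iff_add_le'.mpr hra)
  calc (1 + μ * a) * Real.exp (-μ * (a - r))
      ≤ Real.exp (-μ * (a - r)) + a * Real.exp (-μ * (a - r)) := by
        rw [one_add_mul]
        gcongr
        exact mul_le_of_le_one_left ha.le hμ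
    _ ≤ Nat.factorial 2 / (c * (ε * a)) ^ 2 + a * (Nat.factorial 3 / (c * (ε * a)) ^ 3) := by
        gcongr
        exacts [hdecay 2, hdecay 3]
    _ = (2 / (c * ε) ^ 2 + 6 / (c * ε) ^ 3) * (1 / a ^ 2) := by
        norm_num [Nat.factorial]
        field_simp

lemma exists_abs_integral_exp_mul_self_sub_le {ε c : ℝ} (hε : 0 < ε) (hc : 0 < c) :
    ∃ C, 0 < C ∧ ∀ a, 0 < a → c ≤ muFn a → ∀ r, 0 ≤ r → r + ε * a ≤ a →
      |(∫ y in r..a, Real.exp (-muFn a * (y - r)) * y) - (1 + muFn a * r)| ≤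
        C * ((1 + muFn a * r) / a ^ 2) := by
  refine ⟨(π ^ 2 + (2 / (c * ε) ^ 2 + 6 / (c * ε) ^ 3)) / c ^ 2, by positivity,
    fun a ha hcμ r hr hra => ?_⟩
  have hμ : 0 < muFn a := hc.trans_le hcμ
  have hboundary := one_add_mul_mul_exp_le hε hc hcμ (muFn_le_one a) ha hra
  have hsq := sq_muFn hμ
  set μ := muFn a
  have hidentity : (∫ y in r..a, Real.exp (-μ * (y - r)) * y) - (1 + μ * r) =
      (π ^ 2 * ((1 + μ * r) / a ^ 2) - (1 + μ * a) * Real.exp (-μ * (a - r))) / μ ^ 2 := by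
    rw [integral_exp_neg_mul_sub_mul_self hμ.ne', show π ^ 2 * ((1 + μ * r) / a ^ 2) =
      (1 + μ * r) * (1 - μ ^ 2) by rw [hsq]; ring]
    field_simp
    ring
  have hone : 1 / a ^ 2 ≤ (1 + μ * r) / a ^ 2 := by
    gcongr
    exact le_add_of_nonneg_right (by positivity)
  rw [hidentity, abs_div, abs_of_pos (pow_pos hμ 2), div_mul_eq_mul_div]
  gcongr
  calc |π ^ 2 * ((1 + μ * r) / a ^ 2) - (1 + μ * a) * Real.exp (-μ * (a - r))|
      ≤ π ^ 2 * ((1 + μ * r) / a ^ 2) + (1 + μ * a) * Real.exp (-μ * (a - r)) := by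
        refine (abs_sub _ _).trans_eq ?_
        rw [abs_of_nonneg (by positivity), abs_of_nonneg (by positivity)]
    _ ≤ π ^ 2 * ((1 + μ * r) / a ^ 2) +
          (2 / (c * ε) ^ 2 + 6 / (c * ε) ^ 3) * ((1 + μ * r) / a ^ 2) := by
        gcongr _ + ?_
        exact hboundary.trans (mul_le_mul_of_nonneg_left hone (by positivity))
    _ = _ := (add_mul _ _ _).symm

lemma integral_pdens_sub_eq_s17 {a t : ℝ} (ha : 0 < a) (ht : 0 < t) (r x : ℝ) :
    (∫ y in r..a, pdens a t x y) -
        (2 * π * (1 + muFn a * r) * Real.exp (muFn a * (a - r)) / a ^ 3) *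
          wZ a x * thetaBar (t / a ^ 2) =
      a⁻¹ * Real.exp (muFn a * (x - r)) *
        ((∫ y in r..a, Real.exp (-muFn a * (y - r)) *
            kernelRemainder (t / a ^ 2) (x / a) (y / a)) +
          2 * π / a * Real.sin (π * x / a) * thetaBar (t / a ^ 2) *
            ((∫ y in r..a, Real.exp (-muFn a * (y - r)) * y) - (1 + muFn a * r))) := by
  have hcont : Continuous fun y => kernelRemainder (t / a ^ 2) (x / a) (y / a) :=
    (continuous_kernelRemainder (by positivity) (x / a)).comp (continuous_id.div_const a)
  have hdens (y : ℝ) : pdens a t x y = a⁻¹ * Real.exp (muFn a * (x - r)) *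
      (Real.exp (-muFn a * (y - r)) * kernelRemainder (t / a ^ 2) (x / a) (y / a) +
        2 * π / a * Real.sin (π * x / a) * thetaBar (t / a ^ 2) *
          (Real.exp (-muFn a * (y - r)) * y)) := by
    rw [pdens_eq, kernelRemainder, show muFn a * (x - y) = muFn a * (x - r) + -muFn a * (y - r) by
      ring, Real.exp_add]
    ring_nf
  have hmain : Real.exp (muFn a * (a - r)) * Real.exp (muFn a * (x - a)) =
      Real.exp (muFn a * (x - r)) := by
    rw [← Real.exp_add]
    ring_nf
  simp only [hdens]
  rw [intervalIntegral.integral_const_mul, intervalIntegral.integral_add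
    (Continuous.intervalIntegrable (by fun_prop) _ _)
    (Continuous.intervalIntegrable (by fun_prop) _ _), intervalIntegral.integral_const_mul, wZ,
    ← hmain]
  field_simp
  ring

lemma one_add_le_mul_one_add_mul {c μ r : ℝ} (hc : 0 < c) (hcμ : c ≤ μ) (hr : 0 ≤ r) :
    1 + r ≤ (1 + 1 / c) * (1 + μ * r) := by
  have hr_le : r ≤ 1 / c * (μ * r) := by
    rw [← mul_assoc, one_div_mul_eq_div]
    exact le_mul_of_one_le_left hr ((one_le_div hc).mpr hcμ)
  have hμr : 0 ≤ μ * r := mul_nonneg (hc.le.trans hcμ) hr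
  have hc_inv : 0 ≤ 1 / c := by positivity
  linarith

lemma exists_abs_linear_part_sub_le {ε c : ℝ} (hε : 0 < ε) (hc : 0 < c) :
    ∃ C, 0 < C ∧ ∀ a, 0 < a → c ≤ muFn a → ∀ s, 0 < s → ∀ x r, 0 ≤ r → r + ε * a ≤ a →
      |2 * π / a * Real.sin (π * x / a) * thetaBar s *
          ((∫ y in r..a, Real.exp (-muFn a * (y - r)) * y) - (1 + muFn a * r))| ≤
        C * ((1 + muFn a * r) / a ^ 3) := by
  obtain ⟨Cθ, hCθ, hthetaBar⟩ := exists_abs_thetaBar_le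
  obtain ⟨C, hC, hlinear⟩ := exists_abs_integral_exp_mul_self_sub_le hε hc
  refine ⟨2 * π * Cθ * C, by positivity, fun a ha hcμ s hs x r hr hra => ?_⟩
  rw [abs_mul, abs_mul, abs_mul, abs_of_pos (div_pos two_pi_pos ha)]
  calc 2 * π / a * |Real.sin (π * x / a)| * |thetaBar s| * |_|
      ≤ 2 * π / a * 1 * Cθ * (C * ((1 + muFn a * r) / a ^ 2)) := by
        gcongr
        exacts [Real.abs_sin_le_one _, hthetaBar s hs, hlinear a ha hcμ r hr hra]
    _ = 2 * π * Cθ * C * ((1 + muFn a * r) / a ^ 3) := by field_simp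

theorem stmt17_general {ε c : ℝ} (hε : 0 < ε) (hc : 0 < c) :
    ∃ C : ℝ, 0 < C ∧ ∀ a : ℝ, 0 < a → c ≤ muFn a → ∀ t : ℝ, 0 < t → ∀ r : ℝ, 0 ≤ r →
      ∀ x ∈ Icc (r + ε * a) a,
      |(∫ y in r..a, pdens a t x y) -
          (2 * π * (1 + muFn a * r) * Real.exp (muFn a * (a - r)) / a ^ 3) *
            wZ a x * thetaBar (t / a ^ 2)| ≤
        C * (2 * π * (1 + muFn a * r) * Real.exp (muFn a * (a - r)) / a ^ 3) *
          ((1 + r ^ 2 + (a - x) ^ 2) / a) * wY a x := by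
  obtain ⟨C₁, hC₁, hremainder⟩ := exists_abs_integral_exp_mul_kernelRemainder_le hε hc
  obtain ⟨C₂, hC₂, hlinear⟩ := exists_abs_linear_part_sub_le hε hc
  refine ⟨(C₁ * (1 + 1 / c) + C₂) / (2 * π), by positivity, fun a ha hcμ t ht r hr x hx => ?_⟩
  have hs : 0 < t / a ^ 2 := by positivity
  set P := 1 + muFn a * r
  set G := 1 + r ^ 2 + (a - x) ^ 2
  have hP : 0 ≤ P := add_nonneg zero_le_one (mul_nonneg (hc.le.trans hcμ) hr)
  have hG1 : 1 ≤ G := by linarith [sq_nonneg r, sq_nonneg (a - x)]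
  rw [integral_pdens_sub_eq_s17 ha ht, abs_mul, abs_of_pos (by positivity)]
  calc a⁻¹ * Real.exp (muFn a * (x - r)) * |_|
      ≤ a⁻¹ * Real.exp (muFn a * (x - r)) * (C₁ * ((1 + r) * G / a ^ 3) + C₂ * (P / a ^ 3)) := by
        gcongr
        exact (abs_add_le _ _).trans (add_le_add (hremainder _ hs a ha _ hcμ r hr x hx)
          (hlinear a ha hcμ _ hs x r hr (hx.1.trans hx.2)))
    _ ≤ a⁻¹ * Real.exp (muFn a * (x - r)) *
          (C₁ * ((1 + 1 / c) * P * G / a ^ 3) + C₂ * (P * G / a ^ 3)) := by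
        gcongr
        exacts [one_add_le_mul_one_add_mul hc hcμ hr, le_mul_of_one_le_right hP hG1]
    _ = _ := by
        rw [wY, show muFn a * (x - r) = muFn a * (a - r) + muFn a * (x - a) by ring, Real.exp_add]
        field_simp

/-- First-moment formula in terms of `θ̄` for `x ≥ r + a/20`. -/
theorem stmt17 :
    ∃ C : ℝ, 0 < C ∧ ∀ a : ℝ, π ≤ a → (1/2 : ℝ) ≤ muFn a →
      ∀ t : ℝ, 0 < t → ∀ r ∈ Set.Icc (0:ℝ) a, ∀ x ∈ Set.Icc (r + a/20) a,
      |(∫ y in r..a, pdens a t x y) -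
          (2 * π * (1 + muFn a * r) * Real.exp (muFn a * (a - r)) / a^3) *
            wZ a x * thetaBar (t / a^2)| ≤
        C * (2 * π * (1 + muFn a * r) * Real.exp (muFn a * (a - r)) / a^3) *
          ((1 + r^2 + (a - x)^2) / a) * wY a x := by
  obtain ⟨C, hC, hbound⟩ := stmt17_general (by norm_num : (0 : ℝ) < 1 / 20) one_half_pos
  exact ⟨C, hC, fun a ha hμ t ht r hr x hx => hbound a (pi_pos.trans_le ha) hμ t ht r hr.1 x
    (by rwa [one_div_mul_eq_div])⟩
end
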